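/- arXiv:1312.3411 — 5 statements merged into one kernel-verified Lean document; each statement's English description precedes it below -/
import Mathlib

section
/- In the Artin monoid of type I_2(p) (p ≥ 3), the alternating product Δ = x_1x_2x_1x_2⋯ with p factors is the least common left multiple of the generators {x_1, x_2}. (For p = 6 this gives the Garside element x_1x_2x_1x_2x_1x_2 of the Artin monoid of type G_2, and for p = 4 the Garside element x_1x_2x_1x_2 of type B_2.) -/
/-!
Call an alternating word of `p` letters a *braid word*; both of them represent `Δ`. The defining
relation exchanges the two braid words, so a word with no braid factor is alone in its class.
Formally, being equal or both having a braid factor is a congruence containing the relation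
(`braidCon`, `eq_or_hasBraidFactor`).

If `x₁` and `x₂` both left-divide `w`, then `w` is represented by two different words, one starting
with each letter, so one of them has a braid factor and `w = s * Δ * t`. Writing `Δ` as the
alternating product that does not start with `xᵢ`, one sees that `xᵢ * Δ` is the alternating
product of `p + 1` factors starting with `xᵢ`, which has the form `Δ * y`. Hence `Δ` can be moved
to the left past `s` (`delta_dvd_mul_delta`), and `Δ` left-divides `w`.
-/

namespace ArtinI2

/-- The alternating word `a b a b ⋯` with `k` letters in the free monoid. -/
def altWord {α : Type*} (a b : α) : ℕ → FreeMonoid α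
  | 0 => 1
  | k + 1 => FreeMonoid.of a * altWord b a k

/-- The alternating product `a * b * a * ⋯` with `k` factors in a monoid. -/
def altProd {P : Type*} [Monoid P] (a b : P) : ℕ → P
  | 0 => 1
  | k + 1 => a * altProd b a k

/-- The relation of type `I₂(p)`: `x₁x₂x₁⋯ = x₂x₁x₂⋯` (`p` factors on both sides);
the two generators `x₁, x₂` are indexed by `Fin 2`. -/
def rels (p : ℕ) : FreeMonoid (Fin 2) → FreeMonoid (Fin 2) → Prop := fun u v =>
  u = altWord (0 : Fin 2) 1 p ∧ v = altWord (1 : Fin 2) 0 p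

/-- The Artin monoid of type `I₂(p)`. -/
abbrev M (p : ℕ) := PresentedMonoid (rels p)

/-- The generator `x_{i+1}`. -/
def x {p : ℕ} (i : Fin 2) : M p := PresentedMonoid.of (rels p) i

/-- `a` left-divides `b`. -/
def LeftDvd {P : Type*} [Monoid P] (a b : P) : Prop := ∃ c, b = a * c

/-- `d` is the least common left multiple of the set `S`. -/
def IsLeftLcm {P : Type*} [Monoid P] (S : Set P) (d : P) : Prop :=
  (∀ a ∈ S, LeftDvd a d) ∧ ∀ w, (∀ a ∈ S, LeftDvd a w) → LeftDvd d w

/-- The word `u` has one of the two alternating words with `p` letters as a factor. -/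
def HasBraidFactor (p : ℕ) (u : FreeMonoid (Fin 2)) : Prop :=
  ∃ s e t, u = s * e * t ∧ (e = altWord 0 1 p ∨ e = altWord 1 0 p)

lemma HasBraidFactor.mul_right {p : ℕ} {u : FreeMonoid (Fin 2)} (h : HasBraidFactor p u)
    (v : FreeMonoid (Fin 2)) : HasBraidFactor p (u * v) := by
  obtain ⟨s, e, t, rfl, he⟩ := h
  exact ⟨s, e, t * v, by simp only [mul_assoc], he⟩

lemma HasBraidFactor.mul_left {p : ℕ} {u : FreeMonoid (Fin 2)} (h : HasBraidFactor p u)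
    (v : FreeMonoid (Fin 2)) : HasBraidFactor p (v * u) := by
  obtain ⟨s, e, t, rfl, he⟩ := h
  exact ⟨v * s, e, t, by simp only [mul_assoc], he⟩

/-- The Rees congruence of the ideal of words with a braid factor: that ideal is collapsed to one
class and every other word is alone in its class. -/
def braidCon (p : ℕ) : Con (FreeMonoid (Fin 2)) where
  r u v := u = v ∨ (HasBraidFactor p u ∧ HasBraidFactor p v)
  iseqv := by
    refine ⟨fun _ => Or.inl rfl, ?_, ?_⟩
    · rintro u v (h | ⟨h, h'⟩)
      · exact Or.inl h.symm
      · exact Or.inr ⟨h', h⟩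
    · rintro u v w (rfl | ⟨h, h'⟩) (rfl | ⟨k, k'⟩)
      · exact Or.inl rfl
      · exact Or.inr ⟨k, k'⟩
      · exact Or.inr ⟨h, h'⟩
      · exact Or.inr ⟨h, k'⟩
  mul' := by
    rintro u v u' v' (rfl | ⟨h, h'⟩) (rfl | ⟨k, k'⟩)
    · exact Or.inl rfl
    · exact Or.inr ⟨k.mul_left _, k'.mul_left _⟩
    · exact Or.inr ⟨h.mul_right _, h'.mul_right _⟩
    · exact Or.inr ⟨h.mul_right _, h'.mul_right _⟩

lemma eq_or_hasBraidFactor {p : ℕ} {u v : FreeMonoid (Fin 2)}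
    (h : PresentedMonoid.mk (rels p) u = PresentedMonoid.mk (rels p) v) :
    u = v ∨ (HasBraidFactor p u ∧ HasBraidFactor p v) := by
  have hle : conGen (rels p) ≤ braidCon p := by
    refine Con.conGen_le.2 ?_
    rintro a b ⟨rfl, rfl⟩
    exact Or.inr ⟨⟨1, _, 1, by simp, Or.inl rfl⟩, ⟨1, _, 1, by simp, Or.inr rfl⟩⟩
  exact hle ((Con.eq _).1 h)

lemma mk_altWord {p : ℕ} (i j : Fin 2) (k : ℕ) :
    PresentedMonoid.mk (rels p) (altWord i j k) = altProd (x (p := p) i) (x j) k := by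
  induction k generalizing i j with
  | zero => exact map_one _
  | succ k ih =>
    rw [altWord, altProd, map_mul, ih]
    rfl

lemma altProd_comm (p : ℕ) :
    altProd (x (p := p) 0) (x 1) p = altProd (x (p := p) 1) (x 0) p := by
  rw [← mk_altWord, ← mk_altWord]
  exact (Con.eq _).2 (ConGen.Rel.of _ _ ⟨rfl, rfl⟩)

lemma altProd_dvd_succ {P : Type*} [Monoid P] (a b : P) (k : ℕ) :
    LeftDvd (altProd a b k) (altProd a b (k + 1)) := by
  induction k generalizing a b with
  | zero => exact ⟨_, (one_mul _).symm⟩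
  | succ k ih =>
    obtain ⟨c, hc⟩ := ih b a
    exact ⟨c, by rw [altProd, hc, altProd, mul_assoc]⟩

/-- `x i * Δ` is the alternating product of `p + 1` factors starting with `x i`, and its first `p`
factors give `Δ`. -/
lemma delta_dvd_x_mul_delta (p : ℕ) (i : Fin 2) :
    LeftDvd (altProd (x (p := p) 0) (x 1) p) (x i * altProd (x (p := p) 0) (x 1) p) := by
  fin_cases i
  · have h := altProd_dvd_succ (x (p := p) 0) (x 1) p
    rwa [altProd, ← altProd_comm] at h
  · have h := altProd_dvd_succ (x (p := p) 1) (x 0) p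
    rwa [altProd, ← altProd_comm] at h

lemma delta_dvd_mul_delta (p : ℕ) (s : FreeMonoid (Fin 2)) :
    LeftDvd (altProd (x (p := p) 0) (x 1) p)
      (PresentedMonoid.mk (rels p) s * altProd (x (p := p) 0) (x 1) p) := by
  induction s using FreeMonoid.recOn with
  | one => exact ⟨1, by simp⟩
  | of_mul i s ih =>
    obtain ⟨c, hc⟩ := ih
    obtain ⟨d, hd⟩ := delta_dvd_x_mul_delta p i
    refine ⟨d * c, ?_⟩
    rw [map_mul, mul_assoc, hc, ← mul_assoc, ← mul_assoc, ← hd]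
    rfl

lemma HasBraidFactor.delta_dvd {p : ℕ} {u : FreeMonoid (Fin 2)} (h : HasBraidFactor p u) :
    LeftDvd (altProd (x (p := p) 0) (x 1) p) (PresentedMonoid.mk (rels p) u) := by
  obtain ⟨s, e, t, rfl, he⟩ := h
  have hΔ : PresentedMonoid.mk (rels p) e = altProd (x (p := p) 0) (x 1) p := by
    rcases he with rfl | rfl
    · exact mk_altWord 0 1 p
    · rw [mk_altWord, altProd_comm]
  obtain ⟨c, hc⟩ := delta_dvd_mul_delta p s
  exact ⟨c * PresentedMonoid.mk (rels p) t, by rw [map_mul, map_mul, hΔ, hc, mul_assoc]⟩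

/-- **Corollary 4**: in the Artin monoid of type `I₂(p)` (`p ≥ 3`), the alternating
product `Δ = x₁x₂x₁x₂⋯` with `p` factors is the least common left multiple of the
generators `x₁, x₂`. (For `p = 6` this is the Garside element of type `G₂`, and for
`p = 4` that of type `B₂`.) -/
theorem statement12 (p : ℕ) (hp : 3 ≤ p) :
    IsLeftLcm (Set.range (x (p := p))) (altProd (x (p := p) 0) (x 1) p) := by
  constructor
  · obtain ⟨q, rfl⟩ : ∃ q, p = q + 1 := ⟨p - 1, by omega⟩
    rintro _ ⟨i, rfl⟩
    fin_cases i
    · exact ⟨altProd (x 1) (x 0) q, rfl⟩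
    · exact ⟨altProd (x 0) (x 1) q, altProd_comm _⟩
  · intro w hw
    obtain ⟨c, hc⟩ := hw _ ⟨0, rfl⟩
    obtain ⟨d, hd⟩ := hw _ ⟨1, rfl⟩
    obtain ⟨u, rfl⟩ := Con.mk'_surjective c
    obtain ⟨v, rfl⟩ := Con.mk'_surjective d
    have hcd : PresentedMonoid.mk (rels p) (FreeMonoid.of 0 * u) =
        PresentedMonoid.mk (rels p) (FreeMonoid.of 1 * v) := by
      rw [map_mul, map_mul]
      exact hc.symm.trans hd
    rcases eq_or_hasBraidFactor hcd with h | ⟨h, -⟩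
    · have h' := congrArg (fun z => (FreeMonoid.toList z).head?) h
      simp at h'
    · rw [hc]
      have := h.delta_dvd
      rwa [map_mul] at this

end ArtinI2
end

section
/- In the Artin monoid of type F_4, the element Δ = x_1x_2x_1(x_3x_2x_1x_3x_2x_3)x_4(x_3x_2x_1x_3x_2x_3)x_4(x_3x_2x_1x_3x_2x_3)x_4 is the least common left multiple of the generators {x_1, x_2, x_3, x_4}. -/
/-!
The proof follows Garside's method. For generators `x i`, `x j` there are words `comp i j` and
`comp j i` such that the defining relations read `x i * comp i j = x j * comp j i`. The crucial
fact (`Complete`) is that this common right multiple is least and that generators can be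
cancelled on the left: every equality `x i * a = x j * b` in the monoid comes from
`a = comp i j * z`, `b = comp j i * z` for a common `z`.

It is proved by induction on the length, which is an invariant since the relations are homogeneous.
For a fixed length it is enough to show that the property passes along the congruence generated
by the relations. Only transitivity is not formal: given `x i * a = x j * b = x k * c`, the element
`b` is a common multiple of `comp j i` and `comp j k` of smaller length, so by induction it is a
multiple of the common multiple computed by word reversing (`rev`, `rev_least`). It then remains
to check the so-called cube condition for the triple `(i, j, k)` (`cube`), a finite computation.

Once the fact holds in all lengths, word reversing computes least common multiples of words, and
applying it successively to the four generators gives `Δ`.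
-/

namespace ArtinF4

open FreeMonoid

/-- The relations of type `F₄` on the four generators `x₁, x₂, x₃, x₄` (indexed by
`Fin 4`, index `i` corresponding to `x_{i+1}`): `x₁x₂x₁ = x₂x₁x₂`;
`x₂x₃x₂x₃ = x₃x₂x₃x₂`; `x₃x₄x₃ = x₄x₃x₄`; `x₁x₃ = x₃x₁`; `x₁x₄ = x₄x₁`;
`x₂x₄ = x₄x₂`. -/
def rels : FreeMonoid (Fin 4) → FreeMonoid (Fin 4) → Prop := fun u v =>
  (u = of 0 * of 1 * of 0 ∧ v = of 1 * of 0 * of 1) ∨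
  (u = of 1 * of 2 * of 1 * of 2 ∧ v = of 2 * of 1 * of 2 * of 1) ∨
  (u = of 2 * of 3 * of 2 ∧ v = of 3 * of 2 * of 3) ∨
  (u = of 0 * of 2 ∧ v = of 2 * of 0) ∨
  (u = of 0 * of 3 ∧ v = of 3 * of 0) ∨
  (u = of 1 * of 3 ∧ v = of 3 * of 1)

/-- The Artin monoid of type `F₄`. -/
abbrev M := PresentedMonoid rels

/-- The generator `x_{i+1}`. -/
def x (i : Fin 4) : M := PresentedMonoid.of rels i

/-- `a` left-divides `b`. -/
def LeftDvd {P : Type*} [Monoid P] (a b : P) : Prop := ∃ c, b = a * c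

/-- `d` is the least common left multiple of the set `S`. -/
def IsLeftLcm {P : Type*} [Monoid P] (S : Set P) (d : P) : Prop :=
  (∀ a ∈ S, LeftDvd a d) ∧ ∀ w, (∀ a ∈ S, LeftDvd a w) → LeftDvd d w

/-- The element `T₃ = x₃x₂x₁x₃x₂x₃`. -/
def T : M := x 2 * x 1 * x 0 * x 2 * x 1 * x 2

/-! ### Words and length -/

/-- The element of the monoid represented by a word in the generators. -/
def val (l : List (Fin 4)) : M := (l.map x).prod

@[simp] lemma val_nil : val [] = 1 := rfl

@[simp] lemma val_cons (i : Fin 4) (l : List (Fin 4)) : val (i :: l) = x i * val l := by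
  simp [val]

@[simp] lemma val_append (k l : List (Fin 4)) : val (k ++ l) = val k * val l := by
  simp [val]

lemma mk_eq_val (w : FreeMonoid (Fin 4)) : PresentedMonoid.mk rels w = val w.toList := by
  induction w using FreeMonoid.inductionOn' with
  | one => simp
  | of_mul i w ih => simp [ih, x, PresentedMonoid.of]

lemma exists_val (a : M) : ∃ l, a = val l := by
  obtain ⟨w, rfl⟩ := PresentedMonoid.surjective_mk a
  exact ⟨_, mk_eq_val w⟩

/-- The length homomorphism; it is well defined because both sides of each relation have the
same length. -/
def lenHom : M →* Multiplicative ℕ :=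
  PresentedMonoid.lift (fun _ => Multiplicative.ofAdd 1) (by
    rintro a b (⟨rfl, rfl⟩ | ⟨rfl, rfl⟩ | ⟨rfl, rfl⟩ | ⟨rfl, rfl⟩ | ⟨rfl, rfl⟩ | ⟨rfl, rfl⟩) <;>
      simp)

/-- The common length of the words representing an element. -/
def len (a : M) : ℕ := (lenHom a).toAdd

@[simp] lemma len_mul (a b : M) : len (a * b) = len a + len b := by simp [len]

@[simp] lemma len_one : len 1 = 0 := by simp [len]

@[simp] lemma len_x (i : Fin 4) : len (x i) = 1 := by simp [len, lenHom, x]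

@[simp] lemma len_val (l : List (Fin 4)) : len (val l) = l.length := by
  induction l with
  | nil => simp
  | cons i l ih => simp [ih, Nat.add_comm]

/-! ### Complements and word reversing -/

/-- The right complement of `x i` in the least common right multiple of `x i` and `x j`, as a word:
each relation has the form `x i * comp i j = x j * comp j i`. -/
def comp : Fin 4 → Fin 4 → List (Fin 4) :=
  ![![[], [1, 0], [2], [3]],
    ![[0, 1], [], [2, 1, 2], [3]],
    ![[0], [1, 2, 1], [], [3, 2]],
    ![[0], [1], [2, 3], []]]

lemma comp_self (i : Fin 4) : comp i i = [] := by fin_cases i <;> rfl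

lemma mk_eq_of_rels {a b : FreeMonoid (Fin 4)} (h : rels a b) : val a.toList = val b.toList := by
  rw [← mk_eq_val, ← mk_eq_val]
  exact PresentedMonoid.mk_eq_mk_of_rel h

lemma comp_spec (i j : Fin 4) : x i * val (comp i j) = x j * val (comp j i) := by
  have h01 := mk_eq_of_rels (Or.inl ⟨rfl, rfl⟩)
  have h12 := mk_eq_of_rels (Or.inr (Or.inl ⟨rfl, rfl⟩))
  have h23 := mk_eq_of_rels (Or.inr (Or.inr (Or.inl ⟨rfl, rfl⟩)))
  have h02 := mk_eq_of_rels (Or.inr (Or.inr (Or.inr (Or.inl ⟨rfl, rfl⟩))))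
  have h03 := mk_eq_of_rels (Or.inr (Or.inr (Or.inr (Or.inr (Or.inl ⟨rfl, rfl⟩)))))
  have h13 := mk_eq_of_rels (Or.inr (Or.inr (Or.inr (Or.inr (Or.inr ⟨rfl, rfl⟩)))))
  fin_cases i <;> fin_cases j <;>
    first
    | rfl
    | exact h01
    | exact h12
    | exact h23
    | exact h02
    | exact h03
    | exact h13
    | exact h01.symm
    | exact h12.symm
    | exact h23.symm
    | exact h02.symm
    | exact h03.symm
    | exact h13.symm

/-- Word reversing: `rev n u v = some (p, q)` means that the computation with fuel `n` terminates
and that `u ++ p` and `v ++ q` both represent the least common right multiple of `u` and `v`. -/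
def rev : ℕ → List (Fin 4) → List (Fin 4) → Option (List (Fin 4) × List (Fin 4))
  | _, [], v => some (v, [])
  | _, u, [] => some ([], u)
  | 0, _, _ => none
  | n + 1, i :: u, j :: v =>
    match rev n u (comp i j), rev n (comp j i) v with
    | some (p₁, q₁), some (p₂, q₂) =>
      match rev n q₁ p₂ with
      | some (p₃, q₃) => some (p₁ ++ p₃, q₂ ++ q₃)
      | none => none
    | _, _ => none

lemma rev_cons {n : ℕ} {i j : Fin 4} {u v p q : List (Fin 4)}
    (h : rev (n + 1) (i :: u) (j :: v) = some (p, q)) :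
    ∃ p₁ q₁ p₂ q₂ p₃ q₃, rev n u (comp i j) = some (p₁, q₁) ∧
      rev n (comp j i) v = some (p₂, q₂) ∧ rev n q₁ p₂ = some (p₃, q₃) ∧
      p = p₁ ++ p₃ ∧ q = q₂ ++ q₃ := by
  rw [rev] at h
  split at h
  · rename_i p₁ q₁ p₂ q₂ h₁ h₂
    split at h
    · rename_i p₃ q₃ h₃
      simp only [Option.some.injEq, Prod.mk.injEq] at h
      exact ⟨p₁, q₁, p₂, q₂, p₃, q₃, h₁, h₂, h₃, h.1.symm, h.2.symm⟩
    · simp at h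
  · simp at h

lemma rev_nil_left {n : ℕ} {v p q : List (Fin 4)} (h : rev n [] v = some (p, q)) :
    p = v ∧ q = [] := by
  cases n <;> simp_all [rev]

lemma rev_nil_right {n : ℕ} {u p q : List (Fin 4)} (h : rev n u [] = some (p, q)) :
    p = [] ∧ q = u := by
  cases n <;> cases u <;> simp_all [rev]

/-- Word reversing produces a common right multiple. -/
lemma rev_sound (n : ℕ) {u v p q : List (Fin 4)} (h : rev n u v = some (p, q)) :
    val u * val p = val v * val q := by
  induction n generalizing u v p q with
  | zero =>
    rcases u with _ | ⟨i, u⟩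
    · obtain ⟨rfl, rfl⟩ := rev_nil_left h; simp
    rcases v with _ | ⟨j, v⟩
    · obtain ⟨rfl, rfl⟩ := rev_nil_right h; simp
    simp [rev] at h
  | succ n ih =>
    rcases u with _ | ⟨i, u⟩
    · obtain ⟨rfl, rfl⟩ := rev_nil_left h; simp
    rcases v with _ | ⟨j, v⟩
    · obtain ⟨rfl, rfl⟩ := rev_nil_right h; simp
    obtain ⟨p₁, q₁, p₂, q₂, p₃, q₃, h₁, h₂, h₃, rfl, rfl⟩ := rev_cons h
    simp only [val_cons, val_append, mul_assoc]
    rw [← mul_assoc (val u), ih h₁, ← mul_assoc (val v), ← ih h₂, mul_assoc, mul_assoc, ih h₃,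
      ← mul_assoc, comp_spec, mul_assoc]

/-- For elements of length at most `n` in the monoid, an equality `x i * a = x j * b` forces it to
be a right multiple of `x i * comp i j`. For `i = j` this is left cancellation. -/
def Complete (n : ℕ) : Prop :=
  ∀ (i j : Fin 4) (a b : M), len (x i * a) ≤ n → x i * a = x j * b →
    ∃ z, a = val (comp i j) * z ∧ b = val (comp j i) * z

/-- The common right multiple produced by word reversing is least, among elements of the lengths
for which `Complete` is known. -/
lemma rev_least {N : ℕ} (hN : Complete N) (n : ℕ) {u v p q : List (Fin 4)}
    (h : rev n u v = some (p, q)) {a b : M} (hl : len (val u * a) ≤ N)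
    (hab : val u * a = val v * b) : ∃ z, a = val p * z ∧ b = val q * z := by
  induction n generalizing u v p q a b with
  | zero =>
    rcases u with _ | ⟨i, u⟩
    · obtain ⟨rfl, rfl⟩ := rev_nil_left h
      exact ⟨b, by simpa using hab, by simp⟩
    rcases v with _ | ⟨j, v⟩
    · obtain ⟨rfl, rfl⟩ := rev_nil_right h
      exact ⟨a, by simp, by simpa using hab.symm⟩
    simp [rev] at h
  | succ n ih =>
    rcases u with _ | ⟨i, u⟩
    · obtain ⟨rfl, rfl⟩ := rev_nil_left h
      exact ⟨b, by simpa using hab, by simp⟩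
    rcases v with _ | ⟨j, v⟩
    · obtain ⟨rfl, rfl⟩ := rev_nil_right h
      exact ⟨a, by simp, by simpa using hab.symm⟩
    obtain ⟨p₁, q₁, p₂, q₂, p₃, q₃, h₁, h₂, h₃, rfl, rfl⟩ := rev_cons h
    rw [val_cons, val_cons, mul_assoc, mul_assoc] at hab
    rw [val_cons, mul_assoc] at hl
    obtain ⟨t, ht₁, ht₂⟩ := hN i j _ _ hl hab
    have e := congrArg len hab
    have e₁ := congrArg len ht₁
    have e₂ := congrArg len ht₂
    simp only [len_mul, len_x] at hl e e₁ e₂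
    obtain ⟨t₁, rfl, hq₁⟩ := ih h₁ (by simp only [len_mul]; omega) ht₁
    obtain ⟨t₂, hp₂, rfl⟩ := ih h₂ (by simp only [len_mul]; omega) ht₂.symm
    have e₃ := congrArg len hq₁
    simp only [len_mul] at e₃
    obtain ⟨z, rfl, rfl⟩ := ih h₃ (by simp only [len_mul]; omega) (hq₁.symm.trans hp₂)
    exact ⟨z, by simp [mul_assoc], by simp [mul_assoc]⟩

/-! ### The cube condition and completeness -/

/-- The cube condition as a computation: the least common multiple `comp j i * p = comp j k * q`
yields a common multiple `x j * comp j i * p` of `x i`, `x j`, `x k`, and as a common multiple of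
`x i` and `x k` it equals `x i * comp i k * r = x k * comp k i * r` for a word `r`. -/
def cubeTest (n : ℕ) (i j k : Fin 4) : Bool :=
  match rev n (comp j i) (comp j k) with
  | some (p, q) =>
    match rev n (comp i j ++ p) (comp i k) with
    | some ([], r) => rev n (comp k j ++ q) (comp k i ++ r) == some ([], [])
    | _ => false
  | none => false

lemma cubeTest_true : ∀ i j k, cubeTest 40 i j k = true := by decide +kernel

lemma cube (i j k : Fin 4) : ∃ n p q r, rev n (comp j i) (comp j k) = some (p, q) ∧
    val (comp i j) * val p = val (comp i k) * val r ∧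
    val (comp k j) * val q = val (comp k i) * val r := by
  have h := cubeTest_true i j k
  rw [cubeTest] at h
  split at h
  · rename_i p q h₁
    split at h
    · rename_i r h₂
      have h₂ := rev_sound _ h₂
      have h₃ := rev_sound _ (eq_of_beq h)
      simp only [val_append, val_nil, mul_one] at h₂ h₃
      exact ⟨_, p, q, r, h₁, h₂, h₃⟩
    · simp at h
  · simp at h

/-- The conclusion of `Complete` for two words, stated for their first letters. -/
def HeadRel (s t : List (Fin 4)) : Prop :=
  ∀ i j a b, s = i :: a → t = j :: b →
    ∃ z, val a = val (comp i j) * z ∧ val b = val (comp j i) * z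

lemma headRel_rels {s t : FreeMonoid (Fin 4)} (h : rels s t) : HeadRel s.toList t.toList := by
  rintro i j a b hs ht
  rcases h with ⟨rfl, rfl⟩ | ⟨rfl, rfl⟩ | ⟨rfl, rfl⟩ | ⟨rfl, rfl⟩ | ⟨rfl, rfl⟩ | ⟨rfl, rfl⟩ <;>
  · simp at hs ht
    obtain ⟨rfl, rfl⟩ := hs
    obtain ⟨rfl, rfl⟩ := ht
    exact ⟨1, by simp [comp], by simp [comp]⟩

/-- The induction step for transitivity; this is where the cube condition is used. -/
lemma headRel_trans {n : ℕ} (hn : Complete n) {s t u : List (Fin 4)} (hl : t.length ≤ n + 1)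
    (ht : t ≠ []) (h₁ : HeadRel s t) (h₂ : HeadRel t u) : HeadRel s u := by
  rintro i k a c rfl rfl
  obtain ⟨j, b, rfl⟩ := List.exists_cons_of_ne_nil ht
  obtain ⟨z, ha, hb⟩ := h₁ _ _ _ _ rfl rfl
  obtain ⟨z', hb', hc⟩ := h₂ _ _ _ _ rfl rfl
  obtain ⟨m, p, q, r, hr, hp, hq⟩ := cube i j k
  obtain ⟨y, rfl, rfl⟩ := rev_least hn m hr
    (by rw [← hb, len_val]; simpa using hl) (hb.symm.trans hb')
  refine ⟨val r * y, ?_, ?_⟩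
  · rw [ha, ← mul_assoc, hp, mul_assoc]
  · rw [hc, ← mul_assoc, hq, mul_assoc]

lemma val_eq_of_rel {s t : FreeMonoid (Fin 4)} (h : ConGen.Rel rels s t) :
    val s.toList = val t.toList := by
  rw [← mk_eq_val, ← mk_eq_val]
  exact PresentedMonoid.mk_eq_mk_iff.2 h

lemma length_eq_of_rel {s t : FreeMonoid (Fin 4)} (h : ConGen.Rel rels s t) :
    s.toList.length = t.toList.length := by
  simpa using congrArg len (val_eq_of_rel h)

lemma headRel_of_rel {n : ℕ} (hn : Complete n) {s t : FreeMonoid (Fin 4)}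
    (h : ConGen.Rel rels s t) (hl : s.toList.length ≤ n + 1) : HeadRel s.toList t.toList := by
  induction h with
  | of s t h => exact headRel_rels h
  | refl s =>
    rintro i j a b hs ht
    rw [hs, List.cons.injEq] at ht
    obtain ⟨rfl, rfl⟩ := ht
    exact ⟨val a, by simp [comp_self], by simp [comp_self]⟩
  | symm h ih =>
    rintro i j a b hs ht
    obtain ⟨z, h₁, h₂⟩ := ih (by rw [length_eq_of_rel h]; exact hl) j i b a ht hs
    exact ⟨z, h₂, h₁⟩
  | @trans s t u h₁ h₂ ih₁ ih₂ =>
    have e := length_eq_of_rel h₁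
    by_cases ht : t.toList = []
    · rintro i j a b hs -
      simp [hs, ht] at e
    · exact headRel_trans hn (e ▸ hl) ht (ih₁ hl) (ih₂ (e ▸ hl))
  | @mul s s' t t' h₁ h₂ ih₁ ih₂ =>
    have e := length_eq_of_rel h₁
    rw [FreeMonoid.toList_mul, List.length_append] at hl
    rw [FreeMonoid.toList_mul, FreeMonoid.toList_mul]
    rcases hs : s.toList with _ | ⟨i, a⟩
    · rcases hs' : s'.toList with _ | ⟨j, b⟩
      · exact ih₂ (by omega)
      · simp [hs, hs'] at e
    · rcases hs' : s'.toList with _ | ⟨j, b⟩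
      · simp [hs, hs'] at e
      · obtain ⟨z, hz₁, hz₂⟩ := ih₁ (by omega) i j a b hs hs'
        rintro i' j' a' b' ha hb
        simp only [List.cons_append, List.cons.injEq] at ha hb
        obtain ⟨rfl, rfl⟩ := ha
        obtain ⟨rfl, rfl⟩ := hb
        refine ⟨z * val t.toList, ?_, ?_⟩
        · rw [val_append, hz₁, mul_assoc]
        · rw [val_append, hz₂, val_eq_of_rel h₂, mul_assoc]

lemma complete (n : ℕ) : Complete n := by
  induction n with
  | zero =>
    intro i j a b hl
    simp at hl
  | succ n ih =>
    intro i j a b hl hab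
    obtain ⟨s, rfl⟩ := exists_val a
    obtain ⟨t, rfl⟩ := exists_val b
    have h : PresentedMonoid.mk rels (ofList (i :: s)) =
        PresentedMonoid.mk rels (ofList (j :: t)) := by
      simpa only [mk_eq_val, toList_ofList, val_cons] using hab
    have h : ConGen.Rel rels (ofList (i :: s)) (ofList (j :: t)) := Quotient.exact h
    refine headRel_of_rel ih h ?_ i j s t rfl rfl
    simpa [Nat.add_comm] using hl

/-! ### Least common multiples -/

lemma leftDvd_of_rev {n : ℕ} {u v p : List (Fin 4)} (h : rev n u v = some (p, [])) :
    LeftDvd (val u) (val v) :=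
  ⟨val p, by simpa using (rev_sound n h).symm⟩

lemma leftDvd_lcm {n : ℕ} {u v p q : List (Fin 4)} (h : rev n u v = some (p, q)) {w : M}
    (hu : LeftDvd (val u) w) (hv : LeftDvd (val v) w) : LeftDvd (val (u ++ p)) w := by
  obtain ⟨a, rfl⟩ := hu
  obtain ⟨b, hb⟩ := hv
  obtain ⟨z, rfl, -⟩ := rev_least (complete _) n h le_rfl hb
  exact ⟨z, by simp [mul_assoc]⟩

/-- The word defining `Δ`. -/
def deltaWord : List (Fin 4) :=
  [0, 1, 0, 2, 1, 0, 2, 1, 2, 3, 2, 1, 0, 2, 1, 2, 3, 2, 1, 0, 2, 1, 2, 3]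

lemma val_deltaWord :
    val deltaWord = x 0 * x 1 * x 0 * T * x 3 * T * x 3 * T * x 3 := by
  simp [deltaWord, T, mul_assoc]

/-- A word for the least common right multiple of `u` and `x i`, extending `u` by reversing it
against `[i]`; the empty word if the fuel `n` does not suffice. -/
def lcmGen (n : ℕ) (u : List (Fin 4)) (i : Fin 4) : List (Fin 4) :=
  match rev n u [i] with
  | some (p, _) => u ++ p
  | none => []

lemma leftDvd_lcmGen (n : ℕ) {u : List (Fin 4)} {i : Fin 4} {w : M}
    (hu : LeftDvd (val u) w) (hi : LeftDvd (x i) w) : LeftDvd (val (lcmGen n u i)) w := by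
  rw [lcmGen]
  split
  · rename_i p q h
    exact leftDvd_lcm h hu (by simpa using hi)
  · exact ⟨w, by simp⟩

/-- Reversing shows that `Δ` left-divides the least common multiple of the generators. -/
lemma rev_deltaWord :
    (rev 100 deltaWord (lcmGen 100 (lcmGen 100 (lcmGen 100 [0] 1) 2) 3)).map Prod.snd
      = some [] := by
  decide +kernel

lemma rev_gen_deltaWord : ∀ i : Fin 4, (rev 100 [i] deltaWord).map Prod.snd = some [] := by
  decide +kernel

lemma leftDvd_of_map {n : ℕ} {u v : List (Fin 4)} (h : (rev n u v).map Prod.snd = some []) :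
    LeftDvd (val u) (val v) := by
  obtain ⟨⟨p, q⟩, h, rfl⟩ := Option.map_eq_some_iff.1 h
  exact leftDvd_of_rev h

/-- **Corollary 5**: in the Artin monoid of type `F₄`, the element
`Δ = x₁x₂x₁(x₃x₂x₁x₃x₂x₃)x₄(x₃x₂x₁x₃x₂x₃)x₄(x₃x₂x₁x₃x₂x₃)x₄` is the least common left
multiple of the generators `x₁, x₂, x₃, x₄`. -/
theorem statement14 :
    IsLeftLcm (Set.range x) (x 0 * x 1 * x 0 * T * x 3 * T * x 3 * T * x 3) := by
  rw [← val_deltaWord]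
  constructor
  · rintro _ ⟨i, rfl⟩
    simpa using leftDvd_of_map (rev_gen_deltaWord i)
  · intro w hw
    have hx : ∀ i, LeftDvd (x i) w := fun i => hw _ ⟨i, rfl⟩
    obtain ⟨c, hc⟩ := leftDvd_of_map rev_deltaWord
    obtain ⟨d, rfl⟩ := leftDvd_lcmGen 100
      (leftDvd_lcmGen 100 (leftDvd_lcmGen 100 (u := [0]) (by simpa using hx 0) (hx 1)) (hx 2))
      (hx 3)
    exact ⟨c * d, by rw [hc, mul_assoc]⟩

end ArtinF4
end

section
/- In the Artin monoid of type F_4, let T_3 = x_3x_2x_1x_3x_2x_3 and R_4 = x_4T_3x_4T_3x_4. Then x_iR_4 = R_4x_i for every i ∈ {1, 2, 3}; in particular x_1·x_4(x_3x_2x_1x_3x_2x_3)x_4(x_3x_2x_1x_3x_2x_3)x_4 = x_4(x_3x_2x_1x_3x_2x_3)x_4(x_3x_2x_1x_3x_2x_3)x_4·x_1. -/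
/-! The element `T₃` satisfies `x₁T₃ = T₃x₂` and `x₂T₃ = T₃x₁`: it is the quotient of the Garside
element of the parabolic `⟨x₁, x₂, x₃⟩` (of type `B₃`), which is central there, by the Garside
element of `⟨x₁, x₂⟩` (of type `A₂`), which swaps `x₁` and `x₂`. Since `x₄` commutes with `x₁` and
`x₂`, carrying either of these through `R₄ = x₄T₃x₄T₃x₄` swaps the index twice, so both commute
with `R₄` (`x_one_mul_R`, `x_two_mul_R`).

For `x₃` no such shortcut is available, since `x₃` and `x₄` do not commute. There, `x₃R₄` is
transformed into `R₄x₃` by an explicit chain of seven braid moves (six on `x₃, x₄`, one on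
`x₂, x₃`) interspersed with commutations (`x_three_mul_R`).

Lemma names number the generators as `x₁, …, x₄`, so `x_one` refers to `x 0`. The commutation
lemmas `x31`, `x41`, `x42` move `x₁` and `x₂` to the left; `x31'`, `x42'` are the versions that
apply inside a right-associated product. -/

namespace ArtinF4

open FreeMonoid

/-- The relative Garside element `R₄ = x₄T₃x₄T₃x₄`. -/
def R : M := x 3 * T * x 3 * T * x 3

theorem braid12 : x 0 * x 1 * x 0 = x 1 * x 0 * x 1 :=
  PresentedMonoid.mk_eq_mk_of_rel (x := of 0 * of 1 * of 0) (y := of 1 * of 0 * of 1)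
    (by simp [rels])

theorem braid23 : x 1 * x 2 * x 1 * x 2 = x 2 * x 1 * x 2 * x 1 :=
  PresentedMonoid.mk_eq_mk_of_rel (x := of 1 * of 2 * of 1 * of 2) (y := of 2 * of 1 * of 2 * of 1)
    (by simp [rels])

theorem braid34 : x 2 * x 3 * x 2 = x 3 * x 2 * x 3 :=
  PresentedMonoid.mk_eq_mk_of_rel (x := of 2 * of 3 * of 2) (y := of 3 * of 2 * of 3)
    (by simp [rels])

theorem x31 : x 2 * x 0 = x 0 * x 2 :=
  (PresentedMonoid.mk_eq_mk_of_rel (x := of 0 * of 2) (y := of 2 * of 0) (by simp [rels])).symm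

theorem x41 : x 3 * x 0 = x 0 * x 3 :=
  (PresentedMonoid.mk_eq_mk_of_rel (x := of 0 * of 3) (y := of 3 * of 0) (by simp [rels])).symm

theorem x42 : x 3 * x 1 = x 1 * x 3 :=
  (PresentedMonoid.mk_eq_mk_of_rel (x := of 1 * of 3) (y := of 3 * of 1) (by simp [rels])).symm

theorem x31' (z : M) : x 2 * (x 0 * z) = x 0 * (x 2 * z) := by
  rw [← mul_assoc, x31, mul_assoc]

theorem x42' (z : M) : x 3 * (x 1 * z) = x 1 * (x 3 * z) := by
  rw [← mul_assoc, x42, mul_assoc]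

/-- Together with `x_two_mul_T`: moving a generator of `⟨x₁, x₂⟩` through `T₃` applies the
nontrivial diagram automorphism of `A₂`. -/
theorem x_one_mul_T : x 0 * T = T * x 1 := by
  calc x 0 * T = x 2 * (x 0 * x 1 * x 0) * x 2 * x 1 * x 2 := by simp only [T, mul_assoc, x31']
    _ = x 2 * (x 1 * x 0 * x 1) * x 2 * x 1 * x 2 := by rw [braid12]
    _ = x 2 * x 1 * x 0 * (x 1 * x 2 * x 1 * x 2) := by simp only [mul_assoc]
    _ = x 2 * x 1 * x 0 * (x 2 * x 1 * x 2 * x 1) := by rw [braid23]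
    _ = T * x 1 := by simp only [T, mul_assoc]

theorem x_two_mul_T : x 1 * T = T * x 0 := by
  calc x 1 * T = (x 1 * x 2 * x 1 * x 2) * x 0 * x 1 * x 2 := by simp only [T, mul_assoc, x31']
    _ = (x 2 * x 1 * x 2 * x 1) * x 0 * x 1 * x 2 := by rw [braid23]
    _ = x 2 * x 1 * x 2 * (x 1 * x 0 * x 1) * x 2 := by simp only [mul_assoc]
    _ = x 2 * x 1 * x 2 * (x 0 * x 1 * x 0) * x 2 := by rw [← braid12]
    _ = T * x 0 := by simp only [T, mul_assoc, x31, x31']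

theorem x_one_mul_R : x 0 * R = R * x 0 :=
  calc x 0 * R = x 0 * x 3 * T * x 3 * T * x 3 := by simp only [R, mul_assoc]
    _ = x 3 * (x 0 * T) * x 3 * T * x 3 := by rw [← x41]; simp only [mul_assoc]
    _ = x 3 * T * (x 1 * x 3) * T * x 3 := by rw [x_one_mul_T]; simp only [mul_assoc]
    _ = x 3 * T * x 3 * (x 1 * T) * x 3 := by rw [← x42]; simp only [mul_assoc]
    _ = x 3 * T * x 3 * T * (x 0 * x 3) := by rw [x_two_mul_T]; simp only [mul_assoc]
    _ = R * x 0 := by rw [← x41]; simp only [R, mul_assoc]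

theorem x_two_mul_R : x 1 * R = R * x 1 :=
  calc x 1 * R = x 1 * x 3 * T * x 3 * T * x 3 := by simp only [R, mul_assoc]
    _ = x 3 * (x 1 * T) * x 3 * T * x 3 := by rw [← x42]; simp only [mul_assoc]
    _ = x 3 * T * (x 0 * x 3) * T * x 3 := by rw [x_two_mul_T]; simp only [mul_assoc]
    _ = x 3 * T * x 3 * (x 0 * T) * x 3 := by rw [← x41]; simp only [mul_assoc]
    _ = x 3 * T * x 3 * T * (x 1 * x 3) := by rw [x_one_mul_T]; simp only [mul_assoc]
    _ = R * x 1 := by rw [← x42]; simp only [R, mul_assoc]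

/-- The braid moves alternate with rearrangements by commutations; the parenthesized
subwords are the sides of the braid relations being applied. -/
theorem x_three_mul_R : x 2 * R = R * x 2 :=
  calc
    x 2 * R =
        (x 2 * x 3 * x 2) * x 1 * x 0 * x 2 * x 1 * x 2 * x 3 * x 2 * x 1 * x 0 * x 2 * x 1 *
          x 2 * x 3 := by
      simp only [R, T, mul_assoc]
    _ =
        (x 3 * x 2 * x 3) * x 1 * x 0 * x 2 * x 1 * x 2 * x 3 * x 2 * x 1 * x 0 * x 2 * x 1 *
          x 2 * x 3 := by
      rw [braid34]
    _ =
        x 3 * x 2 * x 1 * x 0 * x 3 * x 2 * x 1 * (x 2 * x 3 * x 2) * x 1 * x 0 * x 2 * x 1 *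
          x 2 * x 3 := by
      simp only [mul_assoc, x41, x42]
    _ =
        x 3 * x 2 * x 1 * x 0 * x 3 * x 2 * x 1 * (x 3 * x 2 * x 3) * x 1 * x 0 * x 2 * x 1 *
          x 2 * x 3 := by
      rw [braid34]
    _ =
        x 3 * x 2 * x 1 * x 0 * (x 3 * x 2 * x 3) * x 1 * x 2 * x 3 * x 1 * x 0 * x 2 * x 1 *
          x 2 * x 3 := by
      simp only [mul_assoc, x41, x42]
    _ =
        x 3 * x 2 * x 1 * x 0 * (x 2 * x 3 * x 2) * x 1 * x 2 * x 3 * x 1 * x 0 * x 2 * x 1 *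
          x 2 * x 3 := by
      rw [braid34]
    _ =
        x 3 * x 2 * x 1 * x 0 * x 2 * x 3 * (x 2 * x 1 * x 2 * x 1) * x 0 * x 3 * x 2 * x 1 *
          x 2 * x 3 := by
      simp only [mul_assoc, x41, x42]
    _ =
        x 3 * x 2 * x 1 * x 0 * x 2 * x 3 * (x 1 * x 2 * x 1 * x 2) * x 0 * x 3 * x 2 * x 1 *
          x 2 * x 3 := by
      rw [braid23]
    _ =
        x 3 * x 2 * x 1 * x 0 * x 2 * x 3 * x 1 * x 2 * x 1 * x 0 * (x 2 * x 3 * x 2) * x 1 *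
          x 2 * x 3 := by
      simp only [mul_assoc, x31, x42, x42']
    _ =
        x 3 * x 2 * x 1 * x 0 * x 2 * x 3 * x 1 * x 2 * x 1 * x 0 * (x 3 * x 2 * x 3) * x 1 *
          x 2 * x 3 := by
      rw [braid34]
    _ =
        x 3 * x 2 * x 1 * x 0 * x 2 * x 1 * (x 3 * x 2 * x 3) * x 1 * x 0 * x 2 * x 3 * x 1 *
          x 2 * x 3 := by
      simp only [mul_assoc, x41, x42]
    _ =
        x 3 * x 2 * x 1 * x 0 * x 2 * x 1 * (x 2 * x 3 * x 2) * x 1 * x 0 * x 2 * x 3 * x 1 *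
          x 2 * x 3 := by
      rw [braid34]
    _ =
        x 3 * x 2 * x 1 * x 0 * x 2 * x 1 * x 2 * x 3 * x 2 * x 1 * x 0 * x 2 * x 1 *
          (x 3 * x 2 * x 3) := by
      simp only [mul_assoc, x42]
    _ =
        x 3 * x 2 * x 1 * x 0 * x 2 * x 1 * x 2 * x 3 * x 2 * x 1 * x 0 * x 2 * x 1 *
          (x 2 * x 3 * x 2) := by
      rw [braid34]
    _ = R * x 2 := by simp only [R, T, mul_assoc]

/-- In type `F₄`, with `T₃ = x₃x₂x₁x₃x₂x₃` and `R₄ = x₄T₃x₄T₃x₄`: `xᵢR₄ = R₄xᵢ` for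
`i ∈ {1, 2, 3}`; in particular `x₁R₄ = R₄x₁`. -/
theorem statement15 :
    (∀ i : Fin 4, (i : ℕ) < 3 → x i * R = R * x i) ∧
    x 0 * (x 3 * (x 2 * x 1 * x 0 * x 2 * x 1 * x 2) * x 3 *
        (x 2 * x 1 * x 0 * x 2 * x 1 * x 2) * x 3) =
      x 3 * (x 2 * x 1 * x 0 * x 2 * x 1 * x 2) * x 3 *
        (x 2 * x 1 * x 0 * x 2 * x 1 * x 2) * x 3 * x 0 := by
  refine ⟨fun i hi => ?_, x_one_mul_R⟩
  fin_cases i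
  · exact x_one_mul_R
  · exact x_two_mul_R
  · exact x_three_mul_R
  · exact absurd hi (by decide)

end ArtinF4
end

section
/- Let S_3 = (x_3x_2x_1x_2x_1)(x_3x_2x_1x_2)x_3 and S_4 = x_4S_3x_4S_3x_4S_3x_4S_3x_4. In the Artin monoid of type H_3, the element Δ(H_3) = x_1x_2x_1x_2x_1·S_3 is the least common left multiple of the generators {x_1, x_2, x_3}. In the Artin monoid of type H_4, the element Δ(H_4) = x_1x_2x_1x_2x_1·S_3·S_4 is the least common left multiple of the generators {x_1, x_2, x_3, x_4}. -/
/-!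
The proof uses the theory of complemented presentations (Garside, Brieskorn–Saito, Dehornoy).

Let `M` be the monoid presented by the braid relations `a · C(a,b) = b · C(b,a)`, where `C(a,b)` is
an alternating word. As the relations are homogeneous, words have a well-defined length in `M`.
The key fact (`lcmUpTo`) is that whenever `a u = b v` in `M` with generators `a, b`, there is `w`
with `u = C(a,b) w` and `v = C(b,a) w`; for `a = b` this is left cancellation. It is proved by
induction on length, and for a given length by induction on the derivation of the equality. The only
delicate case is transitivity `a u = c x = b v`: then `x = C(c,a) p = C(c,b) q` is a shorter common
multiple, so by the outer induction it is a multiple of the lcm of `C(c,a)` and `C(c,b)`, and the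
conclusion follows if the lcm of `a, b` divides the lcm of `c, a, b` as computed in this way. This
is the cube condition, a finite statement about triples of generators.

The lcm of two words is computed by word reversing (`rev`), which is always sound (`rev_sound`)
and, given the key fact, computes least common multiples (`rev_complete`). Hence the cube condition,
the divisibility of `Δ` by each generator, and the equality of `Δ` with the iterated lcm of
the generators are all decided by running `rev`. This yields `isLeftLcm_of_check`, which is
evaluated for the Coxeter matrices of types `H₃` and `H₄`.
-/

namespace ArtinH

open FreeMonoid

/-- The relations of type `H₃` on the generators `x₁, x₂, x₃` (indexed by `Fin 3`, index
`i` corresponding to `x_{i+1}`): `x₁x₂x₁x₂x₁ = x₂x₁x₂x₁x₂`; `x₂x₃x₂ = x₃x₂x₃`;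
`x₁x₃ = x₃x₁`. -/
def rels3 : FreeMonoid (Fin 3) → FreeMonoid (Fin 3) → Prop := fun u v =>
  (u = of 0 * of 1 * of 0 * of 1 * of 0 ∧ v = of 1 * of 0 * of 1 * of 0 * of 1) ∨
  (u = of 1 * of 2 * of 1 ∧ v = of 2 * of 1 * of 2) ∨
  (u = of 0 * of 2 ∧ v = of 2 * of 0)

/-- The relations of type `H₄` on the generators `x₁, x₂, x₃, x₄` (indexed by `Fin 4`):
`x₁x₂x₁x₂x₁ = x₂x₁x₂x₁x₂`; `x₂x₃x₂ = x₃x₂x₃`; `x₃x₄x₃ = x₄x₃x₄`; `x₁x₃ = x₃x₁`;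
`x₁x₄ = x₄x₁`; `x₂x₄ = x₄x₂`. -/
def rels4 : FreeMonoid (Fin 4) → FreeMonoid (Fin 4) → Prop := fun u v =>
  (u = of 0 * of 1 * of 0 * of 1 * of 0 ∧ v = of 1 * of 0 * of 1 * of 0 * of 1) ∨
  (u = of 1 * of 2 * of 1 ∧ v = of 2 * of 1 * of 2) ∨
  (u = of 2 * of 3 * of 2 ∧ v = of 3 * of 2 * of 3) ∨
  (u = of 0 * of 2 ∧ v = of 2 * of 0) ∨
  (u = of 0 * of 3 ∧ v = of 3 * of 0) ∨
  (u = of 1 * of 3 ∧ v = of 3 * of 1)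

/-- The Artin monoid of type `H₃`. -/
abbrev M3 := PresentedMonoid rels3

/-- The Artin monoid of type `H₄`. -/
abbrev M4 := PresentedMonoid rels4

/-- The generator `x_{i+1}` of the type `H₃` monoid. -/
def y (i : Fin 3) : M3 := PresentedMonoid.of rels3 i

/-- The generator `x_{i+1}` of the type `H₄` monoid. -/
def x (i : Fin 4) : M4 := PresentedMonoid.of rels4 i

/-- `a` left-divides `b`. -/
def LeftDvd {P : Type*} [Monoid P] (a b : P) : Prop := ∃ c, b = a * c

/-- `d` is the least common left multiple of the set `S`. -/
def IsLeftLcm {P : Type*} [Monoid P] (S : Set P) (d : P) : Prop :=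
  (∀ a ∈ S, LeftDvd a d) ∧ ∀ w, (∀ a ∈ S, LeftDvd a w) → LeftDvd d w

/-- The element `S₃ = (x₃x₂x₁x₂x₁)(x₃x₂x₁x₂)x₃` in the type `H₃` monoid. -/
def S3H3 : M3 := y 2 * y 1 * y 0 * y 1 * y 0 * (y 2 * y 1 * y 0 * y 1) * y 2

/-- The element `S₃ = (x₃x₂x₁x₂x₁)(x₃x₂x₁x₂)x₃` in the type `H₄` monoid. -/
def S3H4 : M4 := x 2 * x 1 * x 0 * x 1 * x 0 * (x 2 * x 1 * x 0 * x 1) * x 2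

/-- The element `S₄ = x₄S₃x₄S₃x₄S₃x₄S₃x₄` in the type `H₄` monoid. -/
def S4 : M4 := x 3 * S3H4 * x 3 * S3H4 * x 3 * S3H4 * x 3 * S3H4 * x 3

/-! ### Words and the reversing algorithm -/

section Generic

variable {ι : Type*}

/-- The alternating word `a b a b …` of length `k`, starting with `a`. -/
def alt : ℕ → ι → ι → List ι
  | 0, _, _ => []
  | k + 1, a, b => a :: alt k b a

/-- The complement of the generator `a` in the generator `b` for the Coxeter matrix `m`: the word
`b a b …` of length `m a b - 1`, so that the braid relation between `a` and `b` reads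
`a · C(a,b) = b · C(b,a)`. As `m a a = 1`, it is empty when `a = b`. -/
def compl (m : ι → ι → ℕ) (a b : ι) : List ι := alt (m a b - 1) b a

/-- Word reversing: for two words `u, v` it produces words `(u', v')` such that `u u' = v v'` is
the lcm of `u` and `v`. The first argument bounds the recursion depth; `none` means that the bound
was exceeded. -/
def rev (m : ι → ι → ℕ) : ℕ → List ι → List ι → Option (List ι × List ι)
  | 0, _, _ => none
  | _ + 1, [], v => some (v, [])
  | _ + 1, a :: u, [] => some ([], a :: u)
  | k + 1, a :: u, b :: v =>
    match rev m k u (compl m a b), rev m k v (compl m b a) with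
    | some (u₁, c), some (v₁, d) =>
      match rev m k c d with
      | some (c', d') => some (u₁ ++ c', v₁ ++ d')
      | none => none
    | _, _ => none

/-- Reversing certifies that `u` left-divides `v`. -/
def dvdCheck [DecidableEq ι] (m : ι → ι → ℕ) (u v : List ι) : Bool :=
  match rev m 60 u v with
  | some (_, d) => d = []
  | none => false

/-- Reversing certifies that `u` and `v` represent the same element. -/
def eqCheck [DecidableEq ι] (m : ι → ι → ℕ) (u v : List ι) : Bool :=
  rev m 60 u v = some ([], [])

/-- The cube condition at the generators `a, b, c`, certified by reversing: the lcm of `a` and `b`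
divides the lcm of `a, b, c`, the latter being computed through the lcms of `c, a` and `c, b`. -/
def cubeCheck [DecidableEq ι] (m : ι → ι → ℕ) (a b c : ι) : Bool :=
  match rev m 60 (compl m c a) (compl m c b) with
  | some (p, q) =>
    match rev m 60 (compl m a b) (compl m a c ++ p) with
    | some (z, e) => e = [] && eqCheck m (compl m b a ++ z) (compl m b c ++ q)
    | none => false
  | none => false

/-- A word representing the lcm of the letters of `l` together with the word `s`. -/
def lcmWord (m : ι → ι → ℕ) : List ι → List ι → Option (List ι)
  | [], s => some s
  | i :: l, s =>
    match rev m 60 s [i] with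
    | some (t, _) => lcmWord m l (s ++ t)
    | none => none

/-- Reversing certifies that the word `d` represents the lcm of all letters of `l`. -/
def lcmCheck [DecidableEq ι] (m : ι → ι → ℕ) (l d : List ι) : Bool :=
  match lcmWord m l [] with
  | some s => eqCheck m s d
  | none => false

variable (R : FreeMonoid ι → FreeMonoid ι → Prop)

/-- The element of the presented monoid represented by a word. -/
def ev (l : List ι) : PresentedMonoid R := (l.map (PresentedMonoid.of R)).prod

@[simp] lemma ev_nil : ev R [] = 1 := rfl

@[simp] lemma ev_cons (a : ι) (l : List ι) : ev R (a :: l) = PresentedMonoid.of R a * ev R l := by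
  simp [ev]

@[simp] lemma ev_append (l l' : List ι) : ev R (l ++ l') = ev R l * ev R l' := by
  simp [ev]

lemma mk_ofList (l : List ι) : PresentedMonoid.mk R (ofList l) = ev R l := by
  induction l with
  | nil => rfl
  | cons a l ih => rw [ofList_cons, map_mul, ih, ev_cons]; rfl

lemma ev_surjective (p : PresentedMonoid R) : ∃ l, p = ev R l := by
  obtain ⟨w, rfl⟩ := PresentedMonoid.surjective_mk p
  exact ⟨toList w, mk_ofList R (toList w)⟩

lemma ev_eq_iff {u v : List ι} : ev R u = ev R v ↔ conGen R (ofList u) (ofList v) := by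
  rw [← mk_ofList, ← mk_ofList, PresentedMonoid.mk_eq_mk_iff]

lemma alt_length (k : ℕ) (a b : ι) : (alt k a b).length = k := by
  induction k generalizing a b with
  | zero => rfl
  | succ k ih => simp [alt, ih]

/-- `R` is the set of braid relations of the Coxeter matrix `m`, each possibly listed in one
direction only. -/
structure IsArtin (m : ι → ι → ℕ) : Prop where
  diag : ∀ a, m a a = 1
  symm : ∀ a b, m a b = m b a
  rel_form : ∀ u v, R u v → ∃ a b, u = ofList (a :: compl m a b) ∧ v = ofList (b :: compl m b a)
  braid : ∀ a b, ev R (a :: compl m a b) = ev R (b :: compl m b a)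

variable {R} {m : ι → ι → ℕ}

lemma compl_self (hR : IsArtin R m) (a : ι) : compl m a a = [] := by
  simp [compl, hR.diag, alt]

lemma rel_length (hR : IsArtin R m) {u v : FreeMonoid ι} (h : ConGen.Rel R u v) :
    u.length = v.length := by
  induction h with
  | of u v h =>
    obtain ⟨a, b, rfl, rfl⟩ := hR.rel_form u v h
    simp [FreeMonoid.length, compl, alt_length, hR.symm a b]
  | refl => rfl
  | symm _ ih => exact ih.symm
  | trans _ _ ih₁ ih₂ => exact ih₁.trans ih₂
  | mul _ _ ih₁ ih₂ => rw [FreeMonoid.length_mul, FreeMonoid.length_mul, ih₁, ih₂]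

lemma ev_length (hR : IsArtin R m) {u v : List ι} (h : ev R u = ev R v) :
    u.length = v.length :=
  rel_length hR ((ev_eq_iff R).1 h)

/-- Soundness of reversing: its output is a common right completion. -/
lemma rev_sound (hR : IsArtin R m) (k : ℕ) (u v u' v' : List ι)
    (h : rev m k u v = some (u', v')) : ev R u * ev R u' = ev R v * ev R v' := by
  induction k generalizing u v u' v' with
  | zero => simp [rev] at h
  | succ k ih =>
    rcases u with _ | ⟨a, u⟩
    · simp only [rev, Option.some.injEq, Prod.mk.injEq] at h
      obtain ⟨rfl, rfl⟩ := h
      simp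
    rcases v with _ | ⟨b, v⟩
    · simp only [rev, Option.some.injEq, Prod.mk.injEq] at h
      obtain ⟨rfl, rfl⟩ := h
      simp
    simp only [rev] at h
    split at h
    case h_2 => simp at h
    case h_1 u₁ c v₁ d h₁ h₂ =>
    split at h
    case h_2 => simp at h
    case h_1 c' d' h₃ =>
    simp only [Option.some.injEq, Prod.mk.injEq] at h
    obtain ⟨rfl, rfl⟩ := h
    have e₁ := ih _ _ _ _ h₁
    have e₂ := ih _ _ _ _ h₂
    have e₃ := ih _ _ _ _ h₃
    have e := hR.braid a b
    simp only [ev_cons, ev_append] at e ⊢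
    calc _ = PresentedMonoid.of R a * (ev R u * ev R u₁) * ev R c' := by simp only [mul_assoc]
      _ = PresentedMonoid.of R a * ev R (compl m a b) * (ev R c * ev R c') := by
        rw [e₁]; simp only [mul_assoc]
      _ = PresentedMonoid.of R b * (ev R (compl m b a) * ev R d) * ev R d' := by
        rw [e, e₃]; simp only [mul_assoc]
      _ = _ := by rw [← e₂]; simp only [mul_assoc]

variable (R m) in
/-- Up to length `n`, any common multiple of the generators `a` and `b` factors through the braid
word of `a` and `b`, with uniquely determined cofactors. For `a = b` this is left
cancellation of a generator. -/
def LcmUpTo (n : ℕ) : Prop :=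
  ∀ a b (u v : List ι), u.length + 1 ≤ n → ev R (a :: u) = ev R (b :: v) →
    ∃ w, ev R u = ev R (compl m a b ++ w) ∧ ev R v = ev R (compl m b a ++ w)

/-- Completeness of reversing: it computes the least common multiple. -/
lemma rev_complete (hR : IsArtin R m) {n : ℕ} (K : LcmUpTo R m n) (k : ℕ)
    (u v u' v' p q : List ι) (h : rev m k u v = some (u', v')) (hn : u.length + p.length ≤ n)
    (hpq : ev R (u ++ p) = ev R (v ++ q)) :
    ∃ w, ev R p = ev R (u' ++ w) ∧ ev R q = ev R (v' ++ w) := by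
  induction k generalizing u v u' v' p q n with
  | zero => simp [rev] at h
  | succ k ih =>
    rcases u with _ | ⟨a, u⟩
    · simp only [rev, Option.some.injEq, Prod.mk.injEq] at h
      obtain ⟨rfl, rfl⟩ := h
      exact ⟨q, hpq, rfl⟩
    rcases v with _ | ⟨b, v⟩
    · simp only [rev, Option.some.injEq, Prod.mk.injEq] at h
      obtain ⟨rfl, rfl⟩ := h
      exact ⟨p, rfl, hpq.symm⟩
    simp only [rev] at h
    split at h
    case h_2 => simp at h
    case h_1 u₁ c v₁ d h₁ h₂ =>
    split at h
    case h_2 => simp at h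
    case h_1 c' d' h₃ =>
    simp only [Option.some.injEq, Prod.mk.injEq] at h
    obtain ⟨rfl, rfl⟩ := h
    have hl := ev_length hR hpq
    simp only [List.length_append, List.length_cons] at hl hn
    obtain ⟨w, hw₁, hw₂⟩ := K a b (u ++ p) (v ++ q) (by simp; omega) hpq
    have hl₁ := ev_length hR hw₁
    obtain ⟨r, hr₁, hr₂⟩ := ih K _ _ _ _ _ _ h₁ (by omega) hw₁
    obtain ⟨s, hs₁, hs₂⟩ := ih K _ _ _ _ _ _ h₂ (by omega) hw₂
    have hl₂ := ev_length hR hr₂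
    simp only [List.length_append] at hl₁ hl₂
    obtain ⟨t, ht₁, ht₂⟩ := ih K _ _ _ _ _ _ h₃ (by omega) (hr₂.symm.trans hs₂)
    refine ⟨t, ?_, ?_⟩
    · rw [hr₁, ev_append, ht₁]; simp
    · rw [hs₁, ev_append, ht₂]; simp

variable [DecidableEq ι]

lemma eqCheck_sound (hR : IsArtin R m) {u v : List ι} (h : eqCheck m u v = true) :
    ev R u = ev R v := by
  simpa using rev_sound hR _ _ _ _ _ (of_decide_eq_true h)

lemma dvdCheck_sound (hR : IsArtin R m) {u v : List ι} (h : dvdCheck m u v = true) :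
    LeftDvd (ev R u) (ev R v) := by
  unfold dvdCheck at h
  split at h
  case h_2 => simp at h
  case h_1 c d h₁ =>
  obtain rfl : d = [] := of_decide_eq_true h
  exact ⟨ev R c, by simpa using (rev_sound hR _ _ _ _ _ h₁).symm⟩

/-- The cube condition makes the relation "the cofactors of `a` and `b` factor through the braid
word" transitive: a common multiple of `a, c` and of `c, b` is one of `a, b`. -/
lemma cube (hR : IsArtin R m) (hm : ∀ a b c, cubeCheck m a b c = true) {n : ℕ}
    (K : LcmUpTo R m n) {a b c : ι} {u v x p q : List ι} (hx : x.length ≤ n)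
    (hu : ev R u = ev R (compl m a c ++ p)) (hxp : ev R x = ev R (compl m c a ++ p))
    (hxq : ev R x = ev R (compl m c b ++ q)) (hv : ev R v = ev R (compl m b c ++ q)) :
    ∃ w, ev R u = ev R (compl m a b ++ w) ∧ ev R v = ev R (compl m b a ++ w) := by
  have h := hm a b c
  unfold cubeCheck at h
  split at h
  case h_2 => simp at h
  case h_1 p' q' h₁ =>
  split at h
  case h_2 => simp at h
  case h_1 z e h₂ =>
  simp only [Bool.and_eq_true, decide_eq_true_eq] at h
  obtain ⟨rfl, h₃⟩ := h
  have hl := ev_length hR hxp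
  simp only [List.length_append] at hl
  obtain ⟨w, hp, hq⟩ := rev_complete hR K _ _ _ _ _ _ _ h₁ (by omega) (hxp.symm.trans hxq)
  have e₂ := rev_sound hR _ _ _ _ _ h₂
  have e₃ := eqCheck_sound hR h₃
  simp only [ev_append, ev_nil, mul_one] at e₂ e₃ hp hq hu hv
  refine ⟨z ++ w, ?_, ?_⟩
  · simp only [ev_append]
    rw [hu, hp, ← mul_assoc, ← mul_assoc, e₂]
  · simp only [ev_append]
    rw [hv, hq, ← mul_assoc, ← mul_assoc, e₃]

/-- The inductive step, by induction on the derivation of an equality of words of length at most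
`n + 1`; the only case using more than the definitions is transitivity, settled by `cube`. -/
lemma rel_step (hR : IsArtin R m) (hm : ∀ a b c, cubeCheck m a b c = true) {n : ℕ}
    (K : LcmUpTo R m n) {s t : FreeMonoid ι} (h : ConGen.Rel R s t) (hs : s.length ≤ n + 1) :
    (s = ofList [] ∧ t = ofList []) ∨ ∃ a b u v w, s = ofList (a :: u) ∧ t = ofList (b :: v) ∧
      ev R u = ev R (compl m a b ++ w) ∧ ev R v = ev R (compl m b a ++ w) := by
  induction h with
  | of s t h =>
    obtain ⟨a, b, rfl, rfl⟩ := hR.rel_form s t h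
    exact .inr ⟨a, b, _, _, [], rfl, rfl, by simp, by simp⟩
  | refl s =>
    rcases s with _ | ⟨a, u⟩
    · exact .inl ⟨rfl, rfl⟩
    · exact .inr ⟨a, a, u, u, u, rfl, rfl, by simp [compl_self hR], by simp [compl_self hR]⟩
  | symm h ih =>
    rw [← rel_length hR h] at hs
    obtain ⟨h₁, h₂⟩ | ⟨a, b, u, v, w, h₁, h₂, h₃, h₄⟩ := ih hs
    · exact .inl ⟨h₂, h₁⟩
    · exact .inr ⟨b, a, v, u, w, h₂, h₁, h₄, h₃⟩
  | trans h h' ih ih' =>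
    have ih' := ih' (by rwa [← rel_length hR h])
    obtain ⟨rfl, h₂⟩ | ⟨a, c, u, x, p, rfl, h₂, h₃, h₄⟩ := ih hs
    · subst h₂
      obtain ⟨-, h₅⟩ | ⟨c, b, x, v, q, h₅, -⟩ := ih'
      · exact .inl ⟨rfl, h₅⟩
      · exact absurd (ofList.injective h₅) (by simp)
    · subst h₂
      obtain ⟨h₅, -⟩ | ⟨c', b, x', v, q, h₅, rfl, h₆, h₇⟩ := ih'
      · exact absurd (ofList.injective h₅) (by simp)
      · obtain ⟨rfl, rfl⟩ : c = c' ∧ x = x' := by simpa using ofList.injective h₅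
        have hl := rel_length hR h
        have hx : x.length ≤ n := by
          simp only [FreeMonoid.length, toList_ofList, List.length_cons] at hl hs
          omega
        obtain ⟨w, hw⟩ := cube hR hm K hx h₃ h₄ h₆ h₇
        exact .inr ⟨a, b, u, v, w, rfl, rfl, hw⟩
  | @mul s t s' t' h h' ih ih' =>
    rw [FreeMonoid.length_mul] at hs
    have ih' := ih' (by omega)
    obtain ⟨rfl, rfl⟩ | ⟨a, b, u, v, w, rfl, rfl, h₃, h₄⟩ := ih (by omega)
    · exact ih'
    · have e : ev R (toList s') = ev R (toList t') := (ev_eq_iff R).2 h'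
      refine .inr ⟨a, b, u ++ toList s', v ++ toList t', w ++ toList s', rfl, rfl, ?_, ?_⟩
      · simp only [ev_append] at h₃ ⊢
        rw [h₃, mul_assoc]
      · simp only [ev_append] at h₄ ⊢
        rw [h₄, e, mul_assoc]

lemma lcmUpTo (hR : IsArtin R m) (hm : ∀ a b c, cubeCheck m a b c = true) (n : ℕ) :
    LcmUpTo R m n := by
  induction n with
  | zero => intro a b u v h; omega
  | succ n K =>
    intro a b u v hn h
    obtain ⟨h₁, -⟩ | ⟨a', b', u', v', w, h₁, h₂, h₃⟩ :=
      rel_step hR hm K ((ev_eq_iff R).1 h) (by simpa [FreeMonoid.length] using hn)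
    · exact absurd (ofList.injective h₁) (by simp)
    · obtain ⟨rfl, rfl⟩ : a = a' ∧ u = u' := by simpa using ofList.injective h₁
      obtain ⟨rfl, rfl⟩ : b = b' ∧ v = v' := by simpa using ofList.injective h₂
      exact ⟨w, h₃⟩

lemma lcmWord_dvd (hR : IsArtin R m) (hm : ∀ a b c, cubeCheck m a b c = true)
    {z : PresentedMonoid R} (l s t : List ι) (hl : ∀ i ∈ l, LeftDvd (PresentedMonoid.of R i) z)
    (hs : LeftDvd (ev R s) z) (h : lcmWord m l s = some t) : LeftDvd (ev R t) z := by
  induction l generalizing s with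
  | nil =>
    obtain rfl : s = t := by simpa [lcmWord] using h
    exact hs
  | cons i l ih =>
    simp only [lcmWord] at h
    split at h
    case h_2 => simp at h
    case h_1 c d h₁ =>
    refine ih _ (fun j hj => hl j (List.mem_cons_of_mem _ hj)) ?_ h
    obtain ⟨p, hp⟩ := hs
    obtain ⟨q, hq⟩ := hl i List.mem_cons_self
    obtain ⟨p, rfl⟩ := ev_surjective R p
    obtain ⟨q, rfl⟩ := ev_surjective R q
    obtain ⟨w, hw, -⟩ := rev_complete hR (lcmUpTo hR hm _) 60 s [i] c d p q h₁ le_rfl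
      (by simpa using hp.symm.trans hq)
    refine ⟨ev R w, ?_⟩
    rw [hp, hw]
    simp [mul_assoc]

/-- If reversing certifies the cube condition and that `d` is the lcm of all generators, then `d`
represents the lcm of the generators. -/
theorem isLeftLcm_of_check (hR : IsArtin R m) (hm : ∀ a b c, cubeCheck m a b c = true)
    {l d : List ι} (hd : ∀ i, dvdCheck m [i] d = true) (hl : lcmCheck m l d = true) :
    IsLeftLcm (Set.range (PresentedMonoid.of R)) (ev R d) := by
  refine ⟨?_, fun w hw => ?_⟩
  · rintro _ ⟨i, rfl⟩
    simpa using dvdCheck_sound hR (hd i)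
  · unfold lcmCheck at hl
    split at hl
    case h_2 => simp at hl
    case h_1 s h₁ =>
    rw [← eqCheck_sound hR hl]
    exact lcmWord_dvd hR hm l [] s (fun i _ => hw _ ⟨i, rfl⟩) ⟨w, by simp⟩ h₁

end Generic

/-! ### The types `H₃` and `H₄` -/

/-- The Coxeter matrix of type `H₃`. -/
def cox3 : Fin 3 → Fin 3 → ℕ := !![1, 5, 2; 5, 1, 3; 2, 3, 1]

/-- The Coxeter matrix of type `H₄`. -/
def cox4 : Fin 4 → Fin 4 → ℕ := !![1, 5, 2, 2; 5, 1, 3, 2; 2, 3, 1, 3; 2, 2, 3, 1]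

/-- The word `(x₃x₂x₁x₂x₁)(x₃x₂x₁x₂)x₃` in the type `H₃` generators. -/
def wordS3H3 : List (Fin 3) := [2, 1, 0, 1, 0, 2, 1, 0, 1, 2]

/-- The word `(x₃x₂x₁x₂x₁)(x₃x₂x₁x₂)x₃` in the type `H₄` generators. -/
def wordS3H4 : List (Fin 4) := [2, 1, 0, 1, 0, 2, 1, 0, 1, 2]

lemma isArtin3 : IsArtin rels3 cox3 where
  diag := by decide
  symm := by decide
  rel_form := by
    rintro u v (⟨rfl, rfl⟩ | ⟨rfl, rfl⟩ | ⟨rfl, rfl⟩)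
    exacts [⟨0, 1, rfl, rfl⟩, ⟨1, 2, rfl, rfl⟩, ⟨0, 2, rfl, rfl⟩]
  braid := by
    have h01 : ev rels3 (0 :: compl cox3 0 1) = ev rels3 (1 :: compl cox3 1 0) :=
      (ev_eq_iff _).2 (.of _ _ (.inl ⟨rfl, rfl⟩))
    have h12 : ev rels3 (1 :: compl cox3 1 2) = ev rels3 (2 :: compl cox3 2 1) :=
      (ev_eq_iff _).2 (.of _ _ (.inr (.inl ⟨rfl, rfl⟩)))
    have h02 : ev rels3 (0 :: compl cox3 0 2) = ev rels3 (2 :: compl cox3 2 0) :=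
      (ev_eq_iff _).2 (.of _ _ (.inr (.inr ⟨rfl, rfl⟩)))
    intro a b
    fin_cases a <;> fin_cases b
    exacts [rfl, h01, h02, h01.symm, rfl, h12, h02.symm, h12.symm, rfl]

lemma isArtin4 : IsArtin rels4 cox4 where
  diag := by decide
  symm := by decide
  rel_form := by
    rintro u v (⟨rfl, rfl⟩ | ⟨rfl, rfl⟩ | ⟨rfl, rfl⟩ | ⟨rfl, rfl⟩ | ⟨rfl, rfl⟩ | ⟨rfl, rfl⟩)
    exacts [⟨0, 1, rfl, rfl⟩, ⟨1, 2, rfl, rfl⟩, ⟨2, 3, rfl, rfl⟩, ⟨0, 2, rfl, rfl⟩,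
      ⟨0, 3, rfl, rfl⟩, ⟨1, 3, rfl, rfl⟩]
  braid := by
    have h01 : ev rels4 (0 :: compl cox4 0 1) = ev rels4 (1 :: compl cox4 1 0) :=
      (ev_eq_iff _).2 (.of _ _ (.inl ⟨rfl, rfl⟩))
    have h12 : ev rels4 (1 :: compl cox4 1 2) = ev rels4 (2 :: compl cox4 2 1) :=
      (ev_eq_iff _).2 (.of _ _ (.inr (.inl ⟨rfl, rfl⟩)))
    have h23 : ev rels4 (2 :: compl cox4 2 3) = ev rels4 (3 :: compl cox4 3 2) :=
      (ev_eq_iff _).2 (.of _ _ (.inr (.inr (.inl ⟨rfl, rfl⟩))))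
    have h02 : ev rels4 (0 :: compl cox4 0 2) = ev rels4 (2 :: compl cox4 2 0) :=
      (ev_eq_iff _).2 (.of _ _ (.inr (.inr (.inr (.inl ⟨rfl, rfl⟩)))))
    have h03 : ev rels4 (0 :: compl cox4 0 3) = ev rels4 (3 :: compl cox4 3 0) :=
      (ev_eq_iff _).2 (.of _ _ (.inr (.inr (.inr (.inr (.inl ⟨rfl, rfl⟩))))))
    have h13 : ev rels4 (1 :: compl cox4 1 3) = ev rels4 (3 :: compl cox4 3 1) :=
      (ev_eq_iff _).2 (.of _ _ (.inr (.inr (.inr (.inr (.inr ⟨rfl, rfl⟩))))))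
    intro a b
    fin_cases a <;> fin_cases b
    exacts [rfl, h01, h02, h03, h01.symm, rfl, h12, h13, h02.symm, h12.symm, rfl, h23,
      h03.symm, h13.symm, h23.symm, rfl]

theorem isLeftLcm3 :
    IsLeftLcm (Set.range (PresentedMonoid.of rels3)) (ev rels3 ([0, 1, 0, 1, 0] ++ wordS3H3)) :=
  isLeftLcm_of_check (l := [0, 1, 2]) isArtin3 (by decide +kernel) (by decide +kernel)
    (by decide +kernel)

theorem isLeftLcm4 :
    IsLeftLcm (Set.range (PresentedMonoid.of rels4))
      (ev rels4 ([0, 1, 0, 1, 0] ++ wordS3H4 ++ (3 :: wordS3H4 ++ 3 :: wordS3H4 ++ 3 :: wordS3H4 ++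
        3 :: wordS3H4 ++ [3]))) :=
  isLeftLcm_of_check (l := [0, 1, 2, 3]) isArtin4 (by decide +kernel) (by decide +kernel)
    (by decide +kernel)

/-- **Corollary 6**: in the Artin monoid of type `H₃`, `Δ(H₃) = x₁x₂x₁x₂x₁ ⋅ S₃` is the
least common left multiple of `x₁, x₂, x₃`, and in the Artin monoid of type `H₄`,
`Δ(H₄) = x₁x₂x₁x₂x₁ ⋅ S₃ ⋅ S₄` is the least common left multiple of `x₁, x₂, x₃, x₄`
(where `S₃ = (x₃x₂x₁x₂x₁)(x₃x₂x₁x₂)x₃` and `S₄ = x₄S₃x₄S₃x₄S₃x₄S₃x₄`). -/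
theorem statement16 :
    IsLeftLcm (Set.range y) (y 0 * y 1 * y 0 * y 1 * y 0 * S3H3) ∧
    IsLeftLcm (Set.range x) (x 0 * x 1 * x 0 * x 1 * x 0 * S3H4 * S4) := by
  have h₃ : y 0 * y 1 * y 0 * y 1 * y 0 * S3H3 = ev rels3 ([0, 1, 0, 1, 0] ++ wordS3H3) := by
    simp [S3H3, wordS3H3, y, mul_assoc]
  have h₄ : x 0 * x 1 * x 0 * x 1 * x 0 * S3H4 * S4 =
      ev rels4 ([0, 1, 0, 1, 0] ++ wordS3H4 ++ (3 :: wordS3H4 ++ 3 :: wordS3H4 ++ 3 :: wordS3H4 ++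
        3 :: wordS3H4 ++ [3])) := by
    simp [S4, S3H4, wordS3H4, x, mul_assoc]
  rw [h₃, h₄]
  exact ⟨isLeftLcm3, isLeftLcm4⟩

end ArtinH
end

section
/- Let V_6 = (x_6x_5x_3x_2x_1x_4x_3x_2x_5x_3x_4)(x_6x_5x_3x_2x_1), V_7 = x_7V_6(x_7x_6x_5x_3x_2x_4x_3x_5x_6)x_7, and V_8 = x_8V_7x_8V_7x_8, and let D = x_1(x_2x_1)(x_3x_2x_1)(x_4x_3x_2x_1)·(x_5x_3x_2x_1)(x_4x_3x_2)(x_5x_3)x_4 (the Garside element of the D_5 sub-monoid). Then: in the Artin monoid of type E_6, the element Δ(E_6) = D·V_6 is the least common left multiple of {x_1,…,x_6}; in the Artin monoid of type E_7, the element Δ(E_7) = D·V_6·V_7 is the least common left multiple of {x_1,…,x_7}; and in the Artin monoid of type E_8, the element Δ(E_8) = D·V_6·V_7·V_8 is the least common left multiple of {x_1,…,x_8}. -/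
/-!
The argument is Garside's, organised around word reversing.

For generators `xᵢ`, `xⱼ` let `comp i j` be the word with `xᵢ · comp i j = xⱼ · comp j i` the
braid relation between them.  The heart of the matter is `key`: whenever `xᵢ a = xⱼ b` in the Artin
monoid, `a = comp i j · c` and `b = comp j i · c` for a common `c` (for `i = j` this is left
cancellation).  It is proved by induction on the length of `xᵢ a`, and for fixed length by induction
on the derivation of the equality from the relations.  The only interesting step is transitivity,
through a third word with first letter `xₖ`; there the induction hypothesis, which makes word
reversing compute least common multiples in smaller lengths, reduces the claim to the cube
condition on the triples `(k, i, j)` of generators.  This is a finite check (`cube`).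

Given `key`, reversing computes the least common multiple of any two words for which it terminates.
The theorem then follows from finite computations with words, evaluated by the kernel
(`garside`): each generator left-divides the proposed word `w`, and `w` left-divides the word
obtained by taking least common multiples with the generators one after the other.
-/

namespace ArtinE

/-- The edges of the Coxeter graph `Eₙ` on `0`-based indices (index `i` corresponds to
the generator `x_{i+1}`): the long chain `x₁−x₂−x₃−x₅−x₆−x₇−x₈` and the branch vertex
`x₄` attached to `x₃`. -/
def IsEdge (i j : ℕ) : Prop :=
  (i = 0 ∧ j = 1) ∨ (i = 1 ∧ j = 2) ∨ (i = 2 ∧ j = 3) ∨ (i = 2 ∧ j = 4) ∨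
  (i = 4 ∧ j = 5) ∨ (i = 5 ∧ j = 6) ∨ (i = 6 ∧ j = 7)

/-- The relations of type `Eₙ` (`n ∈ {6,7,8}`): `xᵢxⱼxᵢ = xⱼxᵢxⱼ` for each edge pair
`{i,j}` of the graph, and `xᵢxⱼ = xⱼxᵢ` for all other pairs `i < j`. -/
def rels (n : ℕ) : FreeMonoid (Fin n) → FreeMonoid (Fin n) → Prop := fun u v =>
  (∃ i j : Fin n, IsEdge i j ∧
    u = .of i * .of j * .of i ∧ v = .of j * .of i * .of j) ∨
  (∃ i j : Fin n, i < j ∧ ¬ IsEdge i j ∧ u = .of i * .of j ∧ v = .of j * .of i)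

/-- The Artin monoid of type `Eₙ`. -/
abbrev M (n : ℕ) := PresentedMonoid (rels n)

/-- The generator `x_{i+1}`. -/
def x {n : ℕ} (i : Fin n) : M n := PresentedMonoid.of (rels n) i

/-- The generator `x_{i+1}` as a function of a natural number (`1` out of range). -/
def X (n : ℕ) (i : ℕ) : M n := if h : i < n then x ⟨i, h⟩ else 1

/-- `a` left-divides `b`. -/
def LeftDvd {P : Type*} [Monoid P] (a b : P) : Prop := ∃ c, b = a * c

/-- `d` is the least common left multiple of the set `S`. -/
def IsLeftLcm {P : Type*} [Monoid P] (S : Set P) (d : P) : Prop :=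
  (∀ a ∈ S, LeftDvd a d) ∧ ∀ w, (∀ a ∈ S, LeftDvd a w) → LeftDvd d w

/-- The element `V₆ = (x₆x₅x₃x₂x₁x₄x₃x₂x₅x₃x₄)(x₆x₅x₃x₂x₁)` (written with `0`-based
generator indices). -/
def V6 (n : ℕ) : M n :=
  (X n 5 * X n 4 * X n 2 * X n 1 * X n 0 * X n 3 * X n 2 * X n 1 * X n 4 * X n 2 * X n 3) *
    (X n 5 * X n 4 * X n 2 * X n 1 * X n 0)

/-- The element `V₇ = x₇V₆(x₇x₆x₅x₃x₂x₄x₃x₅x₆)x₇`. -/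
def V7 (n : ℕ) : M n :=
  X n 6 * V6 n *
    (X n 6 * X n 5 * X n 4 * X n 2 * X n 1 * X n 3 * X n 2 * X n 4 * X n 5) * X n 6

/-- The element `V₈ = x₈V₇x₈V₇x₈`. -/
def V8 (n : ℕ) : M n := X n 7 * V7 n * X n 7 * V7 n * X n 7

/-- The Garside element of the `D₅` sub-monoid:
`D = x₁(x₂x₁)(x₃x₂x₁)(x₄x₃x₂x₁)·(x₅x₃x₂x₁)(x₄x₃x₂)(x₅x₃)x₄`. -/
def D (n : ℕ) : M n :=
  X n 0 * (X n 1 * X n 0) * (X n 2 * X n 1 * X n 0) * (X n 3 * X n 2 * X n 1 * X n 0) *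
    (X n 4 * X n 2 * X n 1 * X n 0) * (X n 3 * X n 2 * X n 1) * (X n 4 * X n 2) * X n 3

/-! ### Words and word reversing -/

instance : DecidableRel IsEdge := fun i j => by unfold IsEdge; infer_instance

theorem IsEdge.lt {i j : ℕ} (h : IsEdge i j) : i < j := by
  unfold IsEdge at h; omega

variable {n : ℕ}

/-- The right complement of `xᵢ` in `xⱼ`, as a word: `xᵢ · comp i j = xⱼ · comp j i` is the
least common multiple of `xᵢ` and `xⱼ`. -/
def comp (i j : Fin n) : List (Fin n) :=
  if i = j then [] else if IsEdge i j ∨ IsEdge j i then [j, i] else [j]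

/-- Word reversing with a bound `f` on the recursion depth.  If `rev f u v = some (p, q)`, then
`u · p = v · q` is the least common multiple of `u` and `v` (see `rev_mul` and `rev_lcm`). -/
def rev : ℕ → List (Fin n) → List (Fin n) → Option (List (Fin n) × List (Fin n))
  | _, [], v => some (v, [])
  | _, i :: u, [] => some ([], i :: u)
  | 0, _ :: _, _ :: _ => none
  | f + 1, i :: u, j :: v =>
    match rev f u (comp i j) with
    | none => none
    | some (p, q) =>
      match rev f v (comp j i ++ q) with
      | none => none
      | some (r, s) => some (p ++ s, r)

/-- The element of the Artin monoid represented by a word. -/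
def ev (l : List (Fin n)) : M n := (l.map x).prod

@[simp] theorem ev_nil : ev ([] : List (Fin n)) = 1 := rfl

@[simp] theorem ev_cons (i : Fin n) (l : List (Fin n)) : ev (i :: l) = x i * ev l := by
  simp [ev]

@[simp] theorem ev_append (l m : List (Fin n)) : ev (l ++ m) = ev l * ev m := by
  simp [ev]

theorem mk_eq_ev (u : FreeMonoid (Fin n)) : PresentedMonoid.mk (rels n) u = ev u.toList := by
  induction u using FreeMonoid.inductionOn' with
  | one => rfl
  | of_mul i u ih => rw [map_mul, ih]; rfl

theorem x_braid {i j : Fin n} (h : IsEdge i j) : x i * x j * x i = x j * x i * x j :=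
  Quotient.sound (ConGen.Rel.of _ _ (Or.inl ⟨i, j, h, rfl, rfl⟩))

theorem x_comm {i j : Fin n} (hlt : i < j) (h : ¬ IsEdge i j) : x i * x j = x j * x i :=
  Quotient.sound (ConGen.Rel.of _ _ (Or.inr ⟨i, j, hlt, h, rfl, rfl⟩))

theorem x_mul_comp (i j : Fin n) : x i * ev (comp i j) = x j * ev (comp j i) := by
  by_cases hij : i = j
  · subst hij; rfl
  · by_cases h : IsEdge i j
    · simpa [comp, hij, Ne.symm hij, h, mul_assoc] using x_braid h
    · by_cases h' : IsEdge j i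
      · simpa [comp, hij, Ne.symm hij, h', mul_assoc] using (x_braid h').symm
      · rcases lt_or_gt_of_ne hij with hl | hl
        · simpa [comp, hij, Ne.symm hij, h, h'] using x_comm hl h
        · simpa [comp, hij, Ne.symm hij, h, h'] using (x_comm hl h').symm

theorem rev_mul (f : ℕ) (u v p q : List (Fin n)) (h : rev f u v = some (p, q)) :
    ev u * ev p = ev v * ev q := by
  induction f, u, v using rev.induct generalizing p q with
  | case1 => simp only [rev, Option.some.injEq, Prod.mk.injEq] at h; simp [← h.1, ← h.2]
  | case2 => simp only [rev, Option.some.injEq, Prod.mk.injEq] at h; simp [← h.1, ← h.2]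
  | case3 => simp [rev] at h
  | case4 f i u j v h1 => simp [rev, h1] at h
  | case5 f i u j v p' q' h1 h2 => simp [rev, h1, h2] at h
  | case6 f i u j v p' q' h1 r s h2 ih1 ih2 =>
    simp only [rev, h1, h2, Option.some.injEq, Prod.mk.injEq] at h
    obtain ⟨rfl, rfl⟩ := h
    have e1 := ih1 _ _ h1
    have e2 := ih2 _ _ h2
    calc ev (i :: u) * ev (p' ++ s) = x i * (ev u * ev p') * ev s := by simp [mul_assoc]
      _ = (x i * ev (comp i j)) * ev q' * ev s := by rw [e1]; simp only [mul_assoc]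
      _ = x j * (ev (comp j i ++ q') * ev s) := by rw [x_mul_comp]; simp [mul_assoc]
      _ = ev (j :: v) * ev r := by rw [← e2]; simp [mul_assoc]

/-! ### Length -/

/-- The length homomorphism, which sends each generator to `1`; it is well defined because the
relations are homogeneous. -/
def lenHom : M n →* Multiplicative ℕ :=
  PresentedMonoid.lift (rels := rels n) (fun _ => Multiplicative.ofAdd 1) (by
    rintro u v (⟨i, j, -, rfl, rfl⟩ | ⟨i, j, -, -, rfl, rfl⟩) <;> rfl)

/-- The length of an element of the Artin monoid. -/
def len (a : M n) : ℕ := (lenHom a).toAdd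

@[simp] theorem len_mul (a b : M n) : len (a * b) = len a + len b := by simp [len]

@[simp] theorem len_x (i : Fin n) : len (x i) = 1 := rfl

@[simp] theorem len_one : len (1 : M n) = 0 := by simp [len]

@[simp] theorem len_ev (l : List (Fin n)) : len (ev l) = l.length := by
  induction l with
  | nil => simp
  | cons i l ih => simp [ih, add_comm]

/-! ### The key lemma on common multiples of two generators -/

/-- Common multiples of length at most `N` of two generators are multiples of the braid or
commutation relation between the two. -/
def Key (n N : ℕ) : Prop :=
  ∀ (i j : Fin n) (a b : M n), x i * a = x j * b → len (x i * a) ≤ N →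
    ∃ c, a = ev (comp i j) * c ∧ b = ev (comp j i) * c

/-- Granted `Key`, the word computed by reversing divides every common multiple of length at most
`N`. -/
theorem rev_lcm {N : ℕ} (K : Key n N) (f : ℕ) (u v p q : List (Fin n))
    (h : rev f u v = some (p, q)) (a b : M n) (hab : ev u * a = ev v * b)
    (hl : len (ev u * a) ≤ N) : ∃ d, a = ev p * d ∧ b = ev q * d := by
  induction f, u, v using rev.induct generalizing p q a b with
  | case1 =>
    simp only [rev, Option.some.injEq, Prod.mk.injEq] at h
    exact ⟨b, by simpa [← h.1] using hab, by simp [← h.2]⟩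
  | case2 =>
    simp only [rev, Option.some.injEq, Prod.mk.injEq] at h
    exact ⟨a, by simp [← h.1], by simpa [← h.2] using hab.symm⟩
  | case3 => simp [rev] at h
  | case4 f i u j v h1 => simp [rev, h1] at h
  | case5 f i u j v p' q' h1 h2 => simp [rev, h1, h2] at h
  | case6 f i u j v p' q' h1 r s h2 ih1 ih2 =>
    simp only [rev, h1, h2, Option.some.injEq, Prod.mk.injEq] at h
    obtain ⟨rfl, rfl⟩ := h
    have hl' := hl
    rw [hab] at hl'
    simp only [ev_cons, mul_assoc] at hab hl hl'
    obtain ⟨c, hc1, hc2⟩ := K i j _ _ hab hl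
    rw [len_mul] at hl hl'
    obtain ⟨d, rfl, rfl⟩ := ih1 _ _ h1 a c hc1 (by omega)
    obtain ⟨e, rfl, rfl⟩ := ih2 _ _ h2 b d (by rw [hc2, ev_append, mul_assoc]) (by omega)
    exact ⟨e, by rw [ev_append, mul_assoc], rfl⟩

/-- The cube condition for a triple of generators.  Reversing the two complements of `xₖ` yields
the least common multiple of `xₖ`, `xᵢ`, `xⱼ`; the test asserts that it is a multiple of
`xᵢ · comp i j`, by the same factor on both sides. -/
def cube (k i j : Fin n) : Bool :=
  match rev 20 (comp k i) (comp k j) with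
  | none => false
  | some (p, q) =>
    match rev 20 (comp i j) (comp i k ++ p) with
    | some (r, []) =>
      match rev 20 (comp j k ++ q) (comp j i ++ r) with
      | some ([], []) => true
      | _ => false
    | _ => false

theorem cube_spec {k i j : Fin n} (h : cube k i j = true) :
    ∃ p q r, rev 20 (comp k i) (comp k j) = some (p, q) ∧
      ev (comp i k) * ev p = ev (comp i j) * ev r ∧
      ev (comp j k) * ev q = ev (comp j i) * ev r := by
  unfold cube at h
  split at h
  · cases h
  · rename_i p q h1
    split at h
    · rename_i r h2
      split at h
      · rename_i h3
        refine ⟨p, q, r, h1, ?_, ?_⟩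
        · simpa using (rev_mul _ _ _ _ _ h2).symm
        · simpa using rev_mul _ _ _ _ _ h3
      · cases h
    · cases h

/-- The conclusion of the key lemma for two words representing the same element. -/
def Good (u v : List (Fin n)) : Prop :=
  ∀ i j u' v', u = i :: u' → v = j :: v' →
    ∃ c, ev u' = ev (comp i j) * c ∧ ev v' = ev (comp j i) * c

/-- The induction on derivations: `Key` in length `N` gives its conclusion for equivalent words of
length at most `N + 1`. -/
theorem good_of_rel {N : ℕ} (hc : ∀ k i j : Fin n, cube k i j = true) (K : Key n N)
    {u v : FreeMonoid (Fin n)} (h : ConGen.Rel (rels n) u v)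
    (hl : u.toList.length ≤ N + 1) : Good u.toList v.toList := by
  -- Equality in the monoid, in terms of words.
  have ev_eq {u v : FreeMonoid (Fin n)} (h : ConGen.Rel (rels n) u v) :
      ev u.toList = ev v.toList := by
    rw [← mk_eq_ev, ← mk_eq_ev]; exact Quotient.sound h
  have keyl {u v : FreeMonoid (Fin n)} (h : ConGen.Rel (rels n) u v) :
      u.toList.length = v.toList.length := by
    rw [← len_ev, ev_eq h, len_ev]
  induction h with
  | of u v h =>
    rintro i j u' v' hu hv
    rcases h with ⟨a, b, hab, rfl, rfl⟩ | ⟨a, b, hlt, hab, rfl, rfl⟩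
    · simp only [FreeMonoid.toList_mul, FreeMonoid.toList_of, List.cons_append,
        List.nil_append, List.cons.injEq] at hu hv
      obtain ⟨rfl, rfl⟩ := hu
      obtain ⟨rfl, rfl⟩ := hv
      have hne : a ≠ b := fun e => by simpa [e] using hab.lt
      exact ⟨1, by simp [comp, hne, hab], by simp [comp, hne.symm, hab]⟩
    · simp only [FreeMonoid.toList_mul, FreeMonoid.toList_of, List.cons_append,
        List.nil_append, List.cons.injEq] at hu hv
      obtain ⟨rfl, rfl⟩ := hu
      obtain ⟨rfl, rfl⟩ := hv
      have hba : ¬ IsEdge b a := fun e => absurd e.lt (not_lt.2 hlt.le)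
      exact ⟨1, by simp [comp, hlt.ne, hab, hba], by simp [comp, hlt.ne', hab, hba]⟩
  | refl u =>
    rintro i j u' v' hu hv
    rw [hu, List.cons.injEq] at hv
    obtain ⟨rfl, rfl⟩ := hv
    exact ⟨ev u', by simp [comp], by simp [comp]⟩
  | symm h ih =>
    rintro i j u' v' hu hv
    obtain ⟨c, h1, h2⟩ := ih (by rw [keyl h]; exact hl) j i v' u' hv hu
    exact ⟨c, h2, h1⟩
  | @trans u w v h1 h2 ih1 ih2 =>
    rintro i j u' v' hu hv
    have l1 := keyl h1
    rcases hw : w.toList with _ | ⟨k, w'⟩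
    · rw [hu, hw] at l1; simp at l1
    · obtain ⟨c, hc1, hc2⟩ := ih1 hl i k u' w' hu hw
      obtain ⟨e, he1, he2⟩ := ih2 (by omega) k j w' v' hw hv
      obtain ⟨p, q, r, hr, e1, e2⟩ := cube_spec (hc k i j)
      have hlw : len (ev w') ≤ N := by
        rw [len_ev]; rw [hw, List.length_cons] at l1; omega
      obtain ⟨d, rfl, rfl⟩ := rev_lcm K _ _ _ _ _ hr c e (hc2.symm.trans he1)
        (by rw [← hc2]; exact hlw)
      exact ⟨ev r * d, by rw [hc1, ← mul_assoc, e1, mul_assoc],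
        by rw [he2, ← mul_assoc, e2, mul_assoc]⟩
  | @mul u₁ v₁ u₂ v₂ h1 h2 ih1 ih2 =>
    rintro i j u' v' hu hv
    rw [FreeMonoid.toList_mul] at hu hv hl
    rw [List.length_append] at hl
    have l1 := keyl h1
    rcases hu1 : u₁.toList with _ | ⟨i', t⟩
    · rw [hu1, List.length_nil] at l1
      rw [List.length_eq_zero_iff.1 l1.symm] at hv
      rw [hu1] at hu
      exact ih2 (by omega) i j u' v' hu hv
    · rcases hv1 : v₁.toList with _ | ⟨j', t'⟩
      · rw [hu1, hv1] at l1; simp at l1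
      · rw [hu1, List.cons_append, List.cons.injEq] at hu
        rw [hv1, List.cons_append, List.cons.injEq] at hv
        obtain ⟨rfl, rfl⟩ := hu
        obtain ⟨rfl, rfl⟩ := hv
        obtain ⟨c, hc1, hc2⟩ := ih1 (by omega) i' j' t t' hu1 hv1
        refine ⟨c * ev u₂.toList, ?_, ?_⟩
        · rw [ev_append, hc1, mul_assoc]
        · rw [ev_append, hc2, mul_assoc, ev_eq h2]

theorem exists_word (a : M n) : ∃ u : List (Fin n), a = ev u := by
  obtain ⟨u, rfl⟩ : ∃ u, PresentedMonoid.mk (rels n) u = a := Quotient.exists_rep a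
  exact ⟨u.toList, mk_eq_ev u⟩

/-- If `xᵢ a = xⱼ b`, then this element is a multiple of `xᵢ · comp i j`, by the same factor on
both sides. -/
theorem key (hc : ∀ k i j : Fin n, cube k i j = true) (N : ℕ) : Key n N := by
  induction N with
  | zero => intro i j a b _ hl; simp at hl
  | succ N ih =>
    intro i j a b hab hl
    obtain ⟨u, rfl⟩ := exists_word a
    obtain ⟨v, rfl⟩ := exists_word b
    have h : PresentedMonoid.mk (rels n) (FreeMonoid.ofList (i :: u)) =
        PresentedMonoid.mk (rels n) (FreeMonoid.ofList (j :: v)) := by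
      rw [mk_eq_ev, mk_eq_ev]; simpa using hab
    have h' : ConGen.Rel (rels n) _ _ := Quotient.exact h
    refine good_of_rel hc ih h' ?_ i j u v rfl rfl
    rw [← ev_cons, len_ev] at hl
    exact hl

/-! ### Recognising the least common multiple of the generators -/

/-- Starting from the word `u`, take the least common multiple with each letter of a list
in turn. -/
def lcmWord : List (Fin n) → List (Fin n) → Option (List (Fin n))
  | u, [] => some u
  | u, g :: gs =>
    match rev 300 u [g] with
    | none => none
    | some (p, _) => lcmWord (u ++ p) gs

theorem lcmWord_dvd (hc : ∀ k i j : Fin n, cube k i j = true) (w : M n)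
    (hw : ∀ i, LeftDvd (x i) w) (u gs t : List (Fin n)) (hu : LeftDvd (ev u) w)
    (h : lcmWord u gs = some t) : LeftDvd (ev t) w := by
  induction u, gs using lcmWord.induct with
  | case1 u =>
    rw [lcmWord, Option.some.injEq] at h
    rwa [← h]
  | case2 u g gs h1 => simp [lcmWord, h1] at h
  | case3 u g gs p q h1 ih =>
    simp only [lcmWord, h1] at h
    refine ih ?_ h
    obtain ⟨a, ha⟩ := hu
    obtain ⟨b, hb⟩ := hw g
    obtain ⟨d, rfl, -⟩ := rev_lcm (key hc (len w)) _ _ _ _ _ h1 a b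
      (by rw [← ha, hb]; simp) (by rw [← ha])
    exact ⟨d, by rw [ha, ev_append, mul_assoc]⟩

/-- The test, by word reversing, that every generator left-divides the word `w` and that `w`
left-divides the iterated least common multiple of the generators. -/
def garside (w : List (Fin n)) : Bool :=
  (List.finRange n).all
    (fun i => match rev 300 [i] w with | some (_, []) => true | _ => false) &&
  match lcmWord [] (List.finRange n) with
  | none => false
  | some u => match rev 300 u w with
    | some ([], _) => true
    | _ => false

theorem isLeftLcm_of_garside (hc : ∀ k i j : Fin n, cube k i j = true) {w : List (Fin n)}
    (h : garside w = true) : IsLeftLcm (Set.range (x (n := n))) (ev w) := by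
  rw [garside, Bool.and_eq_true, List.all_eq_true] at h
  obtain ⟨h1, h2⟩ := h
  constructor
  · rintro _ ⟨i, rfl⟩
    have h3 := h1 i (List.mem_finRange i)
    split at h3
    · rename_i r h4
      exact ⟨ev r, by simpa using (rev_mul _ _ _ _ _ h4).symm⟩
    · cases h3
  · intro a ha
    split at h2
    · cases h2
    · rename_i u hu
      split at h2
      · rename_i q h3
        obtain ⟨c, rfl⟩ := lcmWord_dvd hc a (fun i => ha _ ⟨i, rfl⟩) [] _ _
          ⟨a, by simp⟩ hu
        have h4 := rev_mul _ _ _ _ _ h3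
        exact ⟨ev q * c, by rw [← mul_assoc, ← h4]; simp⟩
      · cases h2

/-- The cube condition for all triples of generators. -/
def cubes (n : ℕ) : Bool :=
  (List.finRange n).all fun k => (List.finRange n).all fun i =>
    (List.finRange n).all fun j => cube k i j

theorem cube_of_cubes (h : cubes n = true) (k i j : Fin n) : cube k i j = true := by
  simp only [cubes, List.all_eq_true] at h
  exact h k (List.mem_finRange k) i (List.mem_finRange i) j (List.mem_finRange j)

/-! ### The words of the Garside elements -/

/-- The word defining `V₆`, in `0`-based indices. -/
def wV6 : List ℕ := [5, 4, 2, 1, 0, 3, 2, 1, 4, 2, 3] ++ [5, 4, 2, 1, 0]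

/-- The word defining `V₇`, in `0`-based indices. -/
def wV7 : List ℕ := 6 :: wV6 ++ [6, 5, 4, 2, 1, 3, 2, 4, 5] ++ [6]

/-- The word defining `V₈`, in `0`-based indices. -/
def wV8 : List ℕ := 7 :: wV7 ++ 7 :: wV7 ++ [7]

/-- The word defining `D`, in `0`-based indices. -/
def wD : List ℕ :=
  [0, 1, 0, 2, 1, 0, 3, 2, 1, 0] ++ [4, 2, 1, 0, 3, 2, 1, 4, 2, 3]

/-- The product of the generators `X n i` along a word in natural numbers. -/
def evX (n : ℕ) (l : List ℕ) : M n := (l.map (X n)).prod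

theorem V6_eq : V6 n = evX n wV6 := by simp [V6, evX, wV6, mul_assoc]

theorem V7_eq : V7 n = evX n wV7 := by
  simp [V7, V6_eq, evX, wV7, mul_assoc]

theorem V8_eq : V8 n = evX n wV8 := by
  simp [V8, V7_eq, evX, wV8, mul_assoc]

theorem D_eq : D n = evX n wD := by simp [D, evX, wD, mul_assoc]

theorem evX_append (l m : List ℕ) : evX n (l ++ m) = evX n l * evX n m := by simp [evX]

theorem evX_eq [NeZero n] (l : List ℕ) (h : ∀ i ∈ l, i < n) :
    evX n l = ev (l.map (Fin.ofNat n)) := by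
  rw [evX, ev, List.map_map]
  congr 1
  refine List.map_congr_left fun i hi => ?_
  have hi' := h i hi
  simp only [X, hi', dif_pos, Function.comp_apply]
  congr 1
  exact Fin.ext (Nat.mod_eq_of_lt hi').symm

/-- **Corollary 7**: in the Artin monoid of type `E₆`, `Δ(E₆) = D ⋅ V₆` is the least
common left multiple of `x₁,…,x₆`; in type `E₇`, `Δ(E₇) = D ⋅ V₆ ⋅ V₇` is the least
common left multiple of `x₁,…,x₇`; in type `E₈`, `Δ(E₈) = D ⋅ V₆ ⋅ V₇ ⋅ V₈` is the least
common left multiple of `x₁,…,x₈`. -/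
theorem statement18 :
    IsLeftLcm (Set.range (x (n := 6))) (D 6 * V6 6) ∧
    IsLeftLcm (Set.range (x (n := 7))) (D 7 * V6 7 * V7 7) ∧
    IsLeftLcm (Set.range (x (n := 8))) (D 8 * V6 8 * V7 8 * V8 8) := by
  simp only [V6_eq, V7_eq, V8_eq, D_eq, ← evX_append]
  refine ⟨?_, ?_, ?_⟩
  · rw [evX_eq _ (by decide +kernel)]
    exact isLeftLcm_of_garside (cube_of_cubes (by decide +kernel)) (by decide +kernel)
  · rw [evX_eq _ (by decide +kernel)]
    exact isLeftLcm_of_garside (cube_of_cubes (by decide +kernel)) (by decide +kernel)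
  · rw [evX_eq _ (by decide +kernel)]
    exact isLeftLcm_of_garside (cube_of_cubes (by decide +kernel)) (by decide +kernel)

end ArtinE
end
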